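/- For t ∈ ℝ let π_t : ℝ² × ℝ² → ℝ², π_t(x, y) = x + t·y. Let A ⊂ ℝ² × ℝ² be a Borel set. (1) If dim A ≤ 3, then dim π_t(A) ≥ dim A − 1 for Lebesgue almost every t ∈ ℝ. (2) If dim A > 3, then L²(π_t(A)) > 0 for Lebesgue almost every t ∈ ℝ. -/

import Mathlib

/-!
The proof is the energy method of Kaufman and Falconer.

Let `s < dimH A`. Frostman's lemma gives a probability measure `μ` on a compact subset of `A` with
`μ(B(z, r)) ≤ C r ^ s` (`exists_frostman`). Since `A` is only Borel, this rests on a capacitability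
argument for the dyadic net content: the content is continuous along increasing sequences of
arbitrary sets (`content_iUnion_le_of_monotone`), so that an analytic set of positive content
contains a compact set of positive content (`exists_compact_content_pos`), and on the latter a mass
distribution along the tree of dyadic cubes converges weakly to a measure with the required bound
(`exists_frostman_compact`).

By Parseval's formula for Gaussians and the Gamma integral, such a `μ` satisfies
`∫ (1 + |ζ|²)^(-(4 - s')/2) |μ̂(ζ)|² dζ < ∞` for every `s' < s` with `s' < 4` (`energy_ne_top`).

The Fourier transform of the projection `ν_t` of `μ` by `π_t` at `ξ` is `μ̂(ξ, tξ)`. Therefore the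
mass `pairs μ δ t` of the pairs of points whose projections are `δ`-close is at most a constant
times `δ²` times the integral of `|μ̂|²` against a Gaussian of width `δ⁻¹` on the plane
`{(ξ, tξ)}`, thickened at unit scale, which is allowed because `μ` has compact support
(`exists_pairs_le`). For fixed `ξ` the line `t ↦ tξ` spends time `O(|ξ|⁻¹)` in a unit ball, so
averaging over bounded `t` yields a weight `O(δ^(s' - 3) (1 + |ζ|²)^(-(4 - s')/2))` when `s' ≤ 3`
(`exists_lintegral_kern_le`). Hence `∫ pairs μ δ t dt = O(δ^(s' - 1))` over bounded sets of `t`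
(`exists_lintegral_pairs_le`).

If `dimH A ≤ 3` and `τ < s' - 1`, summing over `δ = 2⁻ᵏ` shows that `ν_t` has finite `τ`-energy for
almost every `t`, and the mass distribution principle gives `dimH (π_t A) ≥ τ`. If `dimH A > 3`,
one may take `s' = 3`, and Fatou's lemma shows that for almost every `t` the lower density
`liminf ν_t(B(u, 2⁻ᵏ)) / 4⁻ᵏ` is finite `ν_t`-almost everywhere. By differentiation of measures this
is impossible when `ν_t` is singular to the Lebesgue measure, so `π_t A` has positive area.
-/

open MeasureTheory
open scoped ENNReal

namespace OberlinProj

open Set Filter Topology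

/-! ### Content of a tree of cubes -/

/-- The union of a family of cubes. The space `X` carries a filtration of partitions, encoded by
labels `q j : X → I`, and the cube of generation `j` labelled `k` is `{x | q j x = k}`. -/
def cov {X I : Type*} (q : ℕ → X → I) (C : Set (ℕ × I)) : Set X := {x | ∃ j, (j, q j x) ∈ C}

/-- Total weight of a family of cubes, where a cube of generation `j` has weight `w j`. -/
noncomputable def wt {I : Type*} (w : ℕ → ℝ≥0∞) (C : Set (ℕ × I)) : ℝ≥0∞ :=
  ∑' a, C.indicator (fun a => w a.1) a

/-- The net content of a set: the infimum of the weights of its covers by cubes. -/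
noncomputable def content {X I : Type*} (q : ℕ → X → I) (w : ℕ → ℝ≥0∞) (E : Set X) : ℝ≥0∞ :=
  ⨅ (C : Set (ℕ × I)) (_ : E ⊆ cov q C), wt w C

section Content

variable {X I : Type*} {q : ℕ → X → I} {w : ℕ → ℝ≥0∞}

lemma content_le {E : Set X} {C : Set (ℕ × I)} (h : E ⊆ cov q C) : content q w E ≤ wt w C :=
  iInf₂_le C h

lemma content_mono {E F : Set X} (h : E ⊆ F) : content q w E ≤ content q w F :=
  le_iInf₂ fun _ hC => content_le (h.trans hC)

lemma content_empty : content q w ∅ = 0 := by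
  refine le_antisymm ((content_le (C := ∅) (empty_subset _)).trans ?_) zero_le
  simp [wt]

lemma exists_cov {E : Set X} {b : ℝ≥0∞} (h : content q w E < b) :
    ∃ C, E ⊆ cov q C ∧ wt w C < b := by
  simpa [content, iInf_lt_iff] using h

lemma wt_iUnion_le {ι : Type*} (C : ι → Set (ℕ × I)) : wt w (⋃ n, C n) ≤ ∑' n, wt w (C n) := by
  unfold wt
  rw [ENNReal.tsum_comm]
  refine ENNReal.tsum_le_tsum fun a => ?_
  by_cases ha : a ∈ ⋃ n, C n
  · obtain ⟨n, hn⟩ := mem_iUnion.1 ha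
    refine le_trans ?_ (ENNReal.le_tsum n)
    simp [hn, ha]
  · simp [ha]

lemma content_iUnion_le {ι : Type*} [Countable ι] (E : ι → Set X) :
    content q w (⋃ n, E n) ≤ ∑' n, content q w (E n) := by
  by_cases hfin : ∑' n, content q w (E n) = ∞
  · simp [hfin]
  refine ENNReal.le_of_forall_pos_le_add fun ε hε _ => ?_
  obtain ⟨e, he, hes⟩ := ENNReal.exists_pos_sum_of_countable' (ENNReal.coe_pos.2 hε).ne' ι
  have : ∀ n, ∃ C, E n ⊆ cov q C ∧ wt w C < content q w (E n) + e n := fun n =>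
    exists_cov (ENNReal.lt_add_right (ENNReal.ne_top_of_tsum_ne_top hfin n) (he n).ne')
  choose C hC hw using this
  calc content q w (⋃ n, E n) ≤ wt w (⋃ n, C n) := by
        refine content_le (iUnion_subset fun n x hx => ?_)
        obtain ⟨j, hj⟩ := hC n hx
        exact ⟨j, mem_iUnion.2 ⟨n, hj⟩⟩
    _ ≤ ∑' n, wt w (C n) := wt_iUnion_le C
    _ ≤ ∑' n, (content q w (E n) + e n) := ENNReal.tsum_le_tsum fun n => (hw n).le
    _ ≤ _ := by rw [ENNReal.tsum_add]; gcongr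

lemma content_cube_le (E : Set X) (j : ℕ) (k : I) (h : ∀ x ∈ E, q j x = k) :
    content q w E ≤ w j := by
  refine (content_le (C := {(j, k)}) fun x hx => ⟨j, by simp [h x hx]⟩).trans ?_
  unfold wt
  rw [tsum_eq_single (j, k)]
  · simp
  · intro b hb
    simp [hb]

/-- `above q a b`: the cube `b` contains the cube `a` and is of the same or an earlier
generation. -/
def above (q : ℕ → X → I) (a b : ℕ × I) : Prop :=
  b.1 ≤ a.1 ∧ ∀ x, q a.1 x = a.2 → q b.1 x = b.2

/-- The cubes of a family that lie in no other cube of the family. -/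
def maxCubes (q : ℕ → X → I) (C : Set (ℕ × I)) : Set (ℕ × I) :=
  {a | a ∈ C ∧ ∀ b ∈ C, above q a b → b = a}

/-- The cubes of either family that lie in a cube of the other one. -/
def meetCubes (q : ℕ → X → I) (A B : Set (ℕ × I)) : Set (ℕ × I) :=
  {a | a ∈ A ∧ ∃ b ∈ B, above q a b} ∪ {b | b ∈ B ∧ ∃ a ∈ A, above q b a}

lemma mem_maxCubes_of_min {C : Set (ℕ × I)} {x : X} {j : ℕ} (hj : (j, q j x) ∈ C)
    (hmin : ∀ i < j, (i, q i x) ∉ C) : (j, q j x) ∈ maxCubes q C := by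
  refine ⟨hj, ?_⟩
  rintro ⟨i, l⟩ hb ⟨hle, hsub⟩
  have hl : q i x = l := hsub x rfl
  subst hl
  rcases hle.lt_or_eq with h | h
  · exact absurd hb (hmin i h)
  · simp only at h
    subst h
    rfl

lemma cov_maxCubes (C : Set (ℕ × I)) : cov q C ⊆ cov q (maxCubes q C) := by
  classical
  intro x hx
  exact ⟨Nat.find hx, mem_maxCubes_of_min (Nat.find_spec hx) fun i hi => Nat.find_min hx hi⟩

/-- Strong subadditivity of the weight of covers: a cube counted twice on the
left belongs to both families. -/
lemma wt_max_add_wt_meet (A B : Set (ℕ × I)) :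
    wt w (maxCubes q (A ∪ B)) + wt w (meetCubes q A B) ≤ wt w A + wt w B := by
  unfold wt
  rw [← ENNReal.tsum_add, ← ENNReal.tsum_add]
  refine ENNReal.tsum_le_tsum fun a => ?_
  have hD : a ∈ maxCubes q (A ∪ B) → a ∈ A ∪ B := fun h => h.1
  have hM : a ∈ meetCubes q A B → a ∈ A ∪ B := by
    rintro (h | h)
    · exact Or.inl h.1
    · exact Or.inr h.1
  have hDM : a ∈ maxCubes q (A ∪ B) → a ∈ meetCubes q A B → a ∈ A ∧ a ∈ B := by
    rintro ⟨-, hmax⟩ (⟨ha, b, hb, hab⟩ | ⟨ha, b, hb, hab⟩)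
    · have := hmax b (Or.inr hb) hab
      subst this
      exact ⟨ha, hb⟩
    · have := hmax b (Or.inl hb) hab
      subst this
      exact ⟨hb, ha⟩
  by_cases h1 : a ∈ maxCubes q (A ∪ B) <;> by_cases h2 : a ∈ meetCubes q A B
  · simp [h1, h2, hDM h1 h2]
  · rcases hD h1 with h | h <;> simp [h1, h2, h]
  · rcases hM h2 with h | h <;> simp [h1, h2, h]
  · simp [h1, h2]

lemma cov_meetCubes (hq : ∀ j x y, q (j + 1) x = q (j + 1) y → q j x = q j y)
    (A B : Set (ℕ × I)) : cov q A ∩ cov q B ⊆ cov q (meetCubes q A B) := by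
  have hq' : ∀ i j, i ≤ j → ∀ x y, q j x = q j y → q i x = q i y := by
    intro i j hij x y
    induction j, hij using Nat.le_induction with
    | base => exact id
    | succ j _ ih => exact fun h => ih (hq j x y h)
  rintro x ⟨⟨i, hi⟩, ⟨j, hj⟩⟩
  rcases le_total i j with h | h
  · exact ⟨j, Or.inr ⟨hj, _, hi, h, fun y hy => hq' i j h y x hy⟩⟩
  · exact ⟨i, Or.inl ⟨hi, _, hj, h, fun y hy => hq' j i h y x hy⟩⟩

/-- Accumulated covers: at each step the next cover is added and only maximal cubes are kept. -/
def accum (q : ℕ → X → I) (C : ℕ → Set (ℕ × I)) : ℕ → Set (ℕ × I)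
  | 0 => C 0
  | n + 1 => maxCubes q (accum q C n ∪ C (n + 1))

lemma cov_accum_mono (C : ℕ → Set (ℕ × I)) (n : ℕ) :
    cov q (accum q C n) ∪ cov q (C (n + 1)) ⊆ cov q (accum q C (n + 1)) := by
  refine Subset.trans ?_ (cov_maxCubes _)
  rintro x (⟨j, hj⟩ | ⟨j, hj⟩)
  · exact ⟨j, Or.inl hj⟩
  · exact ⟨j, Or.inr hj⟩

lemma cov_accum (C : ℕ → Set (ℕ × I)) (n : ℕ) : cov q (C n) ⊆ cov q (accum q C n) := by
  cases n with
  | zero => exact Subset.rfl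
  | succ n => exact subset_union_right.trans (cov_accum_mono C n)

/-- Along an increasing sequence of arbitrary sets, the net content of the union is at most the
limit of the contents (Davies). Near-optimal covers are merged by keeping maximal cubes only;
strong subadditivity keeps the total weight under control. -/
lemma content_iUnion_le_of_monotone
    (hq : ∀ j x y, q (j + 1) x = q (j + 1) y → q j x = q j y)
    {E : ℕ → Set X} (hE : Monotone E) {L : ℝ≥0∞} (hL : ∀ n, content q w (E n) ≤ L) :
    content q w (⋃ n, E n) ≤ L := by
  by_cases hLtop : L = ∞
  · simp [hLtop]
  have hfin : ∀ n, content q w (E n) ≠ ∞ := fun n => ne_top_of_le_ne_top hLtop (hL n)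
  refine ENNReal.le_of_forall_pos_le_add fun ε hε _ => ?_
  obtain ⟨e, he, hes⟩ := ENNReal.exists_pos_sum_of_countable' (ENNReal.coe_pos.2 hε).ne' ℕ
  have : ∀ n, ∃ C, E n ⊆ cov q C ∧ wt w C < content q w (E n) + e n := fun n =>
    exists_cov (ENNReal.lt_add_right (hfin n) (he n).ne')
  choose C hC hw using this
  set V := accum q C with hV
  have hEV : ∀ n, E n ⊆ cov q (V n) := fun n => (hC n).trans (cov_accum C n)
  have hwV : ∀ n, wt w (V n) ≤ content q w (E n) + ∑ m ∈ Finset.range (n + 1), e m := by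
    intro n
    induction n with
    | zero => simpa [hV, accum] using (hw 0).le
    | succ n ih =>
      have h1 := wt_max_add_wt_meet (q := q) (w := w) (V n) (C (n + 1))
      have h2 : content q w (E n) ≤ wt w (meetCubes q (V n) (C (n + 1))) :=
        content_le (Subset.trans
          (subset_inter (hEV n) ((hE n.le_succ).trans (hC (n + 1)))) (cov_meetCubes hq _ _))
      have h3 : wt w (V (n + 1)) + content q w (E n) ≤
          (content q w (E (n + 1)) + ∑ m ∈ Finset.range (n + 1 + 1), e m)
            + content q w (E n) := by
        calc wt w (V (n + 1)) + content q w (E n)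
            ≤ wt w (V n) + wt w (C (n + 1)) := le_trans (by gcongr; exact le_rfl) h1
          _ ≤ (content q w (E n) + ∑ m ∈ Finset.range (n + 1), e m)
              + (content q w (E (n + 1)) + e (n + 1)) := by
                gcongr
                exact (hw (n + 1)).le
          _ = _ := by rw [Finset.sum_range_succ _ (n + 1)]; ring
      exact (ENNReal.add_le_add_iff_right (hfin n)).1 h3
  -- the cubes that survive in all late stages still cover, since the generation of the cube
  -- containing a given point can only decrease
  set W : Set (ℕ × I) := {a | ∀ᶠ n in atTop, a ∈ V n} with hW
  have hcov : (⋃ n, E n) ⊆ cov q W := by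
    classical
    intro x hx
    obtain ⟨n0, hn0⟩ := mem_iUnion.1 hx
    have hx' : ∀ n, n0 ≤ n → x ∈ cov q (V n) := fun n hn => hEV n (hE hn hn0)
    have hne : ∃ j, ∃ n, n0 ≤ n ∧ (j, q j x) ∈ V n := by
      obtain ⟨j, hj⟩ := hx' n0 le_rfl
      exact ⟨j, n0, le_rfl, hj⟩
    obtain ⟨n1, hn1, hmem⟩ := Nat.find_spec hne
    refine ⟨Nat.find hne, ?_⟩
    refine eventually_atTop.2 ⟨n1, fun n hn => ?_⟩
    induction n, hn using Nat.le_induction with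
    | base => exact hmem
    | succ n hn ih =>
      refine mem_maxCubes_of_min (Or.inl ih) fun i hi hcon => ?_
      have h0 : (i, q i x) ∉ V (n + 1) := fun h =>
        Nat.find_min hne hi ⟨n + 1, by omega, h⟩
      -- otherwise the least such generation would give a maximal cube of a generation that
      -- never occurs
      have hex : ∃ i, (i, q i x) ∈ V n ∪ C (n + 1) := ⟨i, hcon⟩
      have hmx := mem_maxCubes_of_min (q := q) (Nat.find_spec hex)
        fun i' hi' => Nat.find_min hex hi'
      have hlt : Nat.find hex < Nat.find hne := (Nat.find_min' hex hcon).trans_lt hi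
      exact Nat.find_min hne hlt ⟨n + 1, by omega, hmx⟩
  refine (content_le hcov).trans ?_
  unfold wt
  rw [ENNReal.tsum_eq_iSup_sum]
  refine iSup_le fun s => ?_
  have hev : ∀ᶠ n in atTop, ∀ a ∈ s, a ∈ W → a ∈ V n := by
    rw [Filter.eventually_all_finset]
    intro a _
    by_cases ha : a ∈ W
    · filter_upwards [ha] with n hn _ using hn
    · exact Eventually.of_forall fun n h => absurd h ha
  obtain ⟨n, hn⟩ := hev.exists
  calc ∑ a ∈ s, W.indicator (fun a => w a.1) a
      ≤ ∑ a ∈ s, (V n).indicator (fun a => w a.1) a := by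
        refine Finset.sum_le_sum fun a ha => ?_
        by_cases h : a ∈ W
        · simp [h, hn a ha h]
        · simp [h]
    _ ≤ wt w (V n) := ENNReal.sum_le_tsum s
    _ ≤ content q w (E n) + ∑ m ∈ Finset.range (n + 1), e m := hwV n
    _ ≤ L + ε := add_le_add (hL n) ((ENNReal.sum_le_tsum _).trans hes.le)

end Content

/-! ### Capacitability -/

/-- A neighbourhood of the image of the compact box `∏ [0, n i]` already contains the image of a
cylinder on which only finitely many coordinates are bounded. -/
lemma exists_cylinder_subset {X : Type*} [TopologicalSpace X] {f : (ℕ → ℕ) → X}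
    (hf : Continuous f) (n : ℕ → ℕ) {U : Set X} (hU : IsOpen U)
    (h : f '' {σ | ∀ i, σ i ≤ n i} ⊆ U) : ∃ k, f '' {σ | ∀ i < k, σ i ≤ n i} ⊆ U := by
  by_contra! hcon
  have : ∀ k, ∃ σ : ℕ → ℕ, (∀ i < k, σ i ≤ n i) ∧ f σ ∉ U := by
    intro k
    obtain ⟨_, ⟨σ, hσ, rfl⟩, hn⟩ := not_subset.1 (hcon k)
    exact ⟨σ, hσ, hn⟩
  choose σ hσ hσU using this
  have hcomp : IsCompact {τ : ℕ → ℕ | ∀ i, τ i ≤ n i} := by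
    have : {τ : ℕ → ℕ | ∀ i, τ i ≤ n i} = Set.pi univ fun i => Set.Iic (n i) := by
      ext τ; simp [Pi.le_def]
    rw [this]
    exact isCompact_univ_pi fun i => (Set.finite_Iic (n i)).isCompact
  obtain ⟨τ, hτ, φ, hφ, hlim⟩ := hcomp.tendsto_subseq (x := fun k i => min (σ k i) (n i))
    fun k i => min_le_right _ _
  have hlim' : Tendsto (fun k => σ (φ k)) atTop (𝓝 τ) := by
    rw [tendsto_pi_nhds] at hlim ⊢
    intro i
    refine (hlim i).congr' ?_
    filter_upwards [eventually_gt_atTop i] with k hk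
    exact min_eq_left (hσ (φ k) i (hk.trans_le hφ.le_apply))
  have hτU : f τ ∈ U := h ⟨τ, hτ, rfl⟩
  have := (hf.tendsto τ).comp hlim' (hU.mem_nhds hτU)
  obtain ⟨k, hk⟩ := (show ∀ᶠ k in atTop, f (σ (φ k)) ∈ U from this).exists
  exact hσU _ hk

/-- An analytic set of positive net content contains a compact set of positive net content,
provided that every cube has a neighbourhood that is covered by `N` cubes of its generation. -/
lemma exists_compact_content_pos {X I : Type*} [TopologicalSpace X] [Countable I]
    {q : ℕ → X → I} {w : ℕ → ℝ≥0∞}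
    (hq : ∀ j x y, q (j + 1) x = q (j + 1) y → q j x = q j y) (N : ℕ)
    (hN : ∀ (j : ℕ) (k : I), ∃ U : Set X, IsOpen U ∧ {x | q j x = k} ⊆ U ∧
      ∃ F : Finset I, F.card ≤ N ∧ ∀ x ∈ U, q j x ∈ F)
    {A : Set X} (hA : AnalyticSet A) (h0 : 0 < content q w A) :
    ∃ K ⊆ A, IsCompact K ∧ 0 < content q w K := by
  rw [AnalyticSet] at hA
  rcases hA with rfl | ⟨f, hf, rfl⟩
  · simp [content_empty] at h0
  obtain ⟨a, ha0, haA⟩ := exists_between h0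
  -- the bounds `n i` are chosen one by one, keeping the content above `a`
  set cyl : List ℕ → Set (ℕ → ℕ) := fun l => {σ | ∀ i (h : i < l.length), σ i ≤ l[i]} with hcyl
  have hstep : ∀ l : List ℕ, a < content q w (f '' cyl l) →
      ∃ m, a < content q w (f '' cyl (l ++ [m])) := by
    intro l hl
    by_contra! hcon
    have hunion : f '' cyl l ⊆ ⋃ m, f '' cyl (l ++ [m]) := by
      rintro _ ⟨σ, hσ, rfl⟩
      refine mem_iUnion.2 ⟨σ l.length, σ, ?_, rfl⟩
      intro i hi
      rw [List.length_append, List.length_singleton] at hi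
      rcases Nat.lt_succ_iff_lt_or_eq.1 hi with h | h
      · rw [List.getElem_append_left h]; exact hσ i h
      · subst h; simp
    have hmono : Monotone fun m => f '' cyl (l ++ [m]) := by
      intro m m' hm
      refine image_mono fun σ hσ i hi => ?_
      have hi' : i < (l ++ [m]).length := by simpa using hi
      refine (hσ i hi').trans ?_
      rcases lt_or_ge i l.length with h | h
      · simp [List.getElem_append_left h]
      · simp [List.getElem_append_right h, hm]
    exact absurd ((content_mono hunion).trans (content_iUnion_le_of_monotone hq hmono hcon))
      (not_le.2 hl)
  choose! g hg using hstep
  set l : ℕ → List ℕ := fun k => Nat.rec [] (fun _ l => l ++ [g l]) k with hl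
  have hlsucc : ∀ k, l (k + 1) = l k ++ [g (l k)] := fun k => rfl
  have hlen : ∀ k, (l k).length = k := by
    intro k
    induction k with
    | zero => rfl
    | succ k ih => rw [hlsucc]; simp [ih]
  have hla : ∀ k, a < content q w (f '' cyl (l k)) := by
    intro k
    induction k with
    | zero =>
      have : cyl (l 0) = univ := by
        refine eq_univ_of_forall fun σ i hi => ?_
        rw [hlen] at hi
        omega
      rwa [this, image_univ]
    | succ k ih => rw [hlsucc]; exact hg _ ih
  set n : ℕ → ℕ := fun i => g (l i) with hn
  have hget : ∀ k i (hi : i < (l k).length), (l k)[i] = n i := by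
    intro k
    induction k with
    | zero => intro i hi; rw [hlen] at hi; omega
    | succ k ih =>
      intro i hi
      rcases lt_or_ge i k with h | h
      · have h' : i < (l k).length := by rwa [hlen]
        have : (l (k + 1))[i] = (l k)[i] := by
          simp only [hlsucc]
          exact List.getElem_append_left h'
        rw [this, ih i h']
      · have hi' : i < k + 1 := lt_of_lt_of_eq hi (hlen (k + 1))
        have : i = k := by omega
        subst this
        simp only [hlsucc, hn]
        rw [List.getElem_append_right (hlen i).le]
        simp
  have hcyl' : ∀ k, cyl (l k) = {σ | ∀ i < k, σ i ≤ n i} := by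
    intro k
    ext σ
    constructor
    · intro h i hi
      have hi' : i < (l k).length := by rwa [hlen]
      rw [← hget k i hi']
      exact h i hi'
    · intro h i hi
      rw [hget k i hi]
      exact h i (by rwa [hlen] at hi)
  refine ⟨f '' {σ | ∀ i, σ i ≤ n i}, image_subset_range _ _, ?_, ?_⟩
  · have : {τ : ℕ → ℕ | ∀ i, τ i ≤ n i} = Set.pi univ fun i => Set.Iic (n i) := by
      ext τ; simp [Pi.le_def]
    rw [this]
    exact (isCompact_univ_pi fun i => (Set.finite_Iic (n i)).isCompact).image hf
  by_contra hcon
  have hz : content q w (f '' {σ | ∀ i, σ i ≤ n i}) = 0 := by simpa using hcon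
  have haN : 0 < a / (N + 1) := ENNReal.div_pos ha0.ne' (by finiteness)
  obtain ⟨C, hC, hCw⟩ := exists_cov (hz.trans_lt haN)
  choose U hUo hU F hF hUF using hN
  have hUw : ∀ j k, content q w (U j k) ≤ N * w j := by
    intro j k
    have h1 : U j k ⊆ ⋃ l : F j k, {x | q j x = l} := fun x hx =>
      mem_iUnion.2 ⟨⟨q j x, hUF j k x hx⟩, rfl⟩
    calc content q w (U j k) ≤ ∑' l : F j k, content q w {x | q j x = l} :=
          (content_mono h1).trans (content_iUnion_le _)
      _ ≤ ∑' l : F j k, w j := ENNReal.tsum_le_tsum fun l => content_cube_le _ j l fun x hx => hx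
      _ = (F j k).card * w j := by simp [tsum_fintype]
      _ ≤ N * w j := by gcongr; exact hF j k
  have hopen : IsOpen (⋃ a : C, U a.1.1 a.1.2) := isOpen_iUnion fun a => hUo _ _
  obtain ⟨k, hk⟩ := exists_cylinder_subset hf n hopen fun x hx => by
    obtain ⟨j, hj⟩ := hC hx
    exact mem_iUnion.2 ⟨⟨_, hj⟩, hU _ _ rfl⟩
  have hlast : content q w (⋃ a : C, U a.1.1 a.1.2) ≤ a := by
    calc content q w (⋃ a : C, U a.1.1 a.1.2) ≤ ∑' a : C, content q w (U a.1.1 a.1.2) :=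
          content_iUnion_le _
      _ ≤ ∑' a : C, N * w a.1.1 := ENNReal.tsum_le_tsum fun a => hUw _ _
      _ = N * wt w C := by
        rw [ENNReal.tsum_mul_left, wt, ← tsum_subtype C fun a => w a.1]
      _ ≤ (N + 1) * (a / (N + 1)) := by
        gcongr
        exact le_self_add
      _ ≤ a := ENNReal.mul_div_le
  have := hla k
  rw [hcyl'] at this
  exact absurd (this.trans_le ((content_mono hk).trans hlast)) (lt_irrefl _)

/-! ### Frostman measures on compact sets -/

section Frostman

variable {X I : Type*} {q : ℕ → X → I} {w : ℕ → ℝ≥0∞}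

open Classical in
/-- The total content of the children of the cube `(j, m)` within `K`. -/
noncomputable def childSum (q : ℕ → X → I) (w : ℕ → ℝ≥0∞) (par : I → I) (K : Set X) (j : ℕ)
    (m : I) : ℝ≥0∞ :=
  ∑' l, if par l = m then content q w (K ∩ {x | q (j + 1) x = l}) else 0

open Classical in
/-- A mass distribution on the tree of cubes: starting from mass one at the cube `(0, k₀)`, the
mass of a cube is shared among its children in proportion to their content within `K`. -/
noncomputable def flow (q : ℕ → X → I) (w : ℕ → ℝ≥0∞) (par : I → I) (K : Set X) (k₀ : I) :
    ℕ → I → ℝ≥0∞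
  | 0, k => if k = k₀ then 1 else 0
  | j + 1, l => flow q w par K k₀ j (par l) *
      (content q w (K ∩ {x | q (j + 1) x = l}) / childSum q w par K j (par l))

variable {par : I → I} {K : Set X} {k₀ : I}

lemma content_le_childSum [Countable I] (hpar : ∀ j x, q j x = par (q (j + 1) x)) (j : ℕ) (m : I) :
    content q w (K ∩ {x | q j x = m}) ≤ childSum q w par K j m := by
  classical
  have hsub : K ∩ {x | q j x = m} ⊆
      ⋃ l, if par l = m then K ∩ {x | q (j + 1) x = l} else ∅ := by
    rintro x ⟨hx, hm⟩
    refine mem_iUnion.2 ⟨q (j + 1) x, ?_⟩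
    have : par (q (j + 1) x) = m := (hpar j x).symm.trans hm
    rw [if_pos this]
    exact ⟨hx, rfl⟩
  refine (content_mono hsub).trans ((content_iUnion_le _).trans ?_)
  refine ENNReal.tsum_le_tsum fun l => ?_
  split_ifs
  · exact le_rfl
  · exact content_empty.le

/-- The flow is bounded by the normalized content: at each step the mass of a cube is multiplied by
the ratio of a content to a sum of contents that is at least the content of the parent. -/
lemma flow_le [Countable I] (hpar : ∀ j x, q j x = par (q (j + 1) x))
    (hK : ∀ x ∈ K, q 0 x = k₀) (j : ℕ) (k : I) :
    flow q w par K k₀ j k * content q w K ≤ content q w (K ∩ {x | q j x = k}) := by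
  classical
  induction j generalizing k with
  | zero =>
    unfold flow
    split_ifs with h
    · rw [one_mul]
      exact content_mono fun x hx => ⟨hx, by simp [hK x hx, h]⟩
    · simp
  | succ j ih =>
    unfold flow
    rw [mul_right_comm]
    refine (mul_le_mul_left ((ih (par k)).trans (content_le_childSum hpar j _)) _).trans ?_
    exact ENNReal.mul_div_le

open Classical in
/-- The mass of a cube is the sum of the masses of its children. -/
lemma tsum_flow_succ [Countable I] (hpar : ∀ j x, q j x = par (q (j + 1) x))
    (hfib : ∀ m, (par ⁻¹' {m}).Finite) (hw : ∀ j, w j ≠ ∞)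
    (hK : ∀ x ∈ K, q 0 x = k₀) (h0 : content q w K ≠ 0) (j : ℕ) (m : I) :
    ∑' l, (if par l = m then flow q w par K k₀ (j + 1) l else 0) = flow q w par K k₀ j m := by
  have hsumtop : childSum q w par K j m ≠ ∞ := by
    have h1 : childSum q w par K j m ≤ ∑' l, (par ⁻¹' {m}).indicator (fun _ => w (j + 1)) l := by
      refine ENNReal.tsum_le_tsum fun l => ?_
      split_ifs with h
      · rw [indicator_of_mem (by simpa using h)]
        exact content_cube_le _ _ l fun x hx => hx.2
      · exact zero_le
    refine ne_top_of_le_ne_top ?_ h1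
    rw [tsum_eq_sum (s := (hfib m).toFinset) (fun l hl =>
      indicator_of_notMem (by simpa using hl) _)]
    refine (ENNReal.sum_lt_top.2 fun l _ => ?_).ne
    by_cases h : l ∈ par ⁻¹' {m}
    · rw [indicator_of_mem h]; exact (hw _).lt_top
    · rw [indicator_of_notMem h]; exact ENNReal.zero_lt_top
  have heq : ∑' l, (if par l = m then flow q w par K k₀ (j + 1) l else 0) =
      flow q w par K k₀ j m * (childSum q w par K j m / childSum q w par K j m) := by
    have key : ∀ b c : ℝ≥0∞, b * (childSum q w par K j m * c) = ∑' l,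
        b * ((if par l = m then content q w (K ∩ {x | q (j + 1) x = l}) else 0) * c) := by
      intro b c
      rw [ENNReal.tsum_mul_left, ENNReal.tsum_mul_right]; rfl
    rw [div_eq_mul_inv, key]
    refine tsum_congr fun l => ?_
    split_ifs with h
    · conv_lhs => unfold flow
      rw [h, div_eq_mul_inv]
    · simp
  rw [heq]
  by_cases hs : childSum q w par K j m = 0
  · have h1 := (flow_le (w := w) hpar hK j m).trans (content_le_childSum hpar j m)
    rw [hs] at h1
    have h2 : flow q w par K k₀ j m = 0 := by
      simpa [h0] using h1
    simp [h2]
  · rw [ENNReal.div_self hs hsumtop, mul_one]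

open Classical in
/-- The mass of a cube is the sum of the masses of its descendants of the `n`-th generation. -/
lemma tsum_flow_add [Countable I] (hpar : ∀ j x, q j x = par (q (j + 1) x))
    (hfib : ∀ m, (par ⁻¹' {m}).Finite) (hw : ∀ j, w j ≠ ∞)
    (hK : ∀ x ∈ K, q 0 x = k₀) (h0 : content q w K ≠ 0) (i n : ℕ) (m : I) :
    ∑' l, (if par^[n] l = m then flow q w par K k₀ (i + n) l else 0) = flow q w par K k₀ i m := by
  induction n with
  | zero => simp
  | succ n ih =>
    rw [← ih]
    have : ∀ l, (if par^[n] l = m then flow q w par K k₀ (i + n) l else 0) =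
        ∑' k, (if par k = l then
          (if par^[n] l = m then flow q w par K k₀ (i + n + 1) k else 0) else 0) := by
      intro l
      split_ifs with h
      · rw [← tsum_flow_succ hpar hfib hw hK h0]
      · simp
    rw [tsum_congr this, ENNReal.tsum_comm]
    refine tsum_congr fun k => ?_
    rw [tsum_eq_single (par k)]
    · by_cases h : par^[n] (par k) = m <;> simp [h, Function.iterate_succ_apply, add_assoc]
    · intro l hl
      simp [Ne.symm hl]

lemma tsum_flow [Countable I] (hpar : ∀ j x, q j x = par (q (j + 1) x))
    (hfib : ∀ m, (par ⁻¹' {m}).Finite) (hw : ∀ j, w j ≠ ∞)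
    (hK : ∀ x ∈ K, q 0 x = k₀) (h0 : content q w K ≠ 0) (j : ℕ) :
    ∑' l, flow q w par K k₀ j l = 1 := by
  classical
  induction j with
  | zero => simp [flow]
  | succ j ih =>
    rw [← ih, ← tsum_congr (tsum_flow_succ hpar hfib hw hK h0 j), ENNReal.tsum_comm]
    refine tsum_congr fun k => ?_
    rw [tsum_eq_single (par k) (by intro l hl; simp [Ne.symm hl])]
    simp

/-- Frostman's lemma for the net content: a compact subset of a cube of positive net content
carries a probability measure for which the mass of an open set is controlled by the number of
cubes of a given generation that it meets. The measure is a weak limit of discretizations of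
`flow`. -/
lemma exists_frostman_compact [MetricSpace X] [MeasurableSpace X] [BorelSpace X] [Countable I]
    (hpar : ∀ j x, q j x = par (q (j + 1) x))
    (hfib : ∀ m, (par ⁻¹' {m}).Finite) (hw : ∀ j, w j ≠ ∞)
    (hKc : IsCompact K) (hK : ∀ x ∈ K, q 0 x = k₀) (h0 : content q w K ≠ 0) :
    ∃ μ : Measure X, IsProbabilityMeasure μ ∧ μ Kᶜ = 0 ∧ ∀ (i : ℕ) (U : Set X) (F : Finset I),
      IsOpen U → (∀ x ∈ U, q i x ∈ F) → μ U ≤ F.card * (w i / content q w K) := by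
  classical
  have hKne : K.Nonempty := by
    by_contra h
    rw [not_nonempty_iff_eq_empty] at h
    rw [h] at h0
    exact h0 content_empty
  obtain ⟨x0, hx0⟩ := hKne
  have hG : content q w K ≠ ∞ :=
    ne_top_of_le_ne_top (hw 0) (content_cube_le K 0 k₀ hK)
  set a := flow q w par K k₀ with ha
  have hale : ∀ j k, a j k ≤ w j / content q w K := fun j k => by
    rw [ENNReal.le_div_iff_mul_le (Or.inl h0) (Or.inl hG)]
    exact (flow_le hpar hK j k).trans (content_cube_le _ j k fun x hx => hx.2)
  have hpt : ∀ j k, ∃ x ∈ K, a j k ≠ 0 → q j x = k := by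
    intro j k
    by_cases hk : a j k = 0
    · exact ⟨x0, hx0, fun h => absurd hk h⟩
    · have h1 := flow_le (w := w) hpar hK j k
      have h2 : (K ∩ {x | q j x = k}).Nonempty := by
        by_contra h
        rw [not_nonempty_iff_eq_empty] at h
        rw [h, content_empty] at h1
        have := nonpos_iff_eq_zero.1 h1
        rcases mul_eq_zero.1 this with h | h
        · exact hk h
        · exact h0 h
      obtain ⟨x, hx, hxk⟩ := h2
      exact ⟨x, hx, fun _ => hxk⟩
  choose x hxK hxq using hpt
  set ν : ℕ → Measure X := fun j => Measure.sum fun k => a j k • Measure.dirac (x j k) with hν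
  have hνapp : ∀ j (S : Set X), MeasurableSet S →
      ν j S = ∑' k, if x j k ∈ S then a j k else 0 := by
    intro j S hS
    rw [hν, Measure.sum_apply _ hS]
    refine tsum_congr fun k => ?_
    rw [Measure.smul_apply, Measure.dirac_apply' _ hS]
    by_cases h : x j k ∈ S <;> simp [h]
  have hprob : ∀ j, IsProbabilityMeasure (ν j) := fun j => ⟨by
    rw [hνapp j _ MeasurableSet.univ]
    simpa using tsum_flow hpar hfib hw hK h0 j⟩
  have hsupp : ∀ j, ν j Kᶜ = 0 := by
    intro j
    rw [hνapp j _ hKc.isClosed.measurableSet.compl]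
    simp [hxK]
  have hanc : ∀ i n y, q i y = par^[n] (q (i + n) y) := by
    intro i n y
    induction n with
    | zero => rfl
    | succ n ih => rw [ih, hpar, Function.iterate_succ_apply]; rfl
  have hbound : ∀ (i n : ℕ) (U : Set X) (F : Finset I), IsOpen U → (∀ x ∈ U, q i x ∈ F) →
      ν (i + n) U ≤ F.card * (w i / content q w K) := by
    intro i n U F hU hF
    rw [hνapp _ U hU.measurableSet]
    calc ∑' k, (if x (i + n) k ∈ U then a (i + n) k else 0)
        ≤ ∑' k, ∑ l ∈ F, (if par^[n] k = l then a (i + n) k else 0) := by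
          refine ENNReal.tsum_le_tsum fun k => ?_
          split_ifs with h
          · by_cases hk : a (i + n) k = 0
            · simp [hk]
            · have h1 : par^[n] k ∈ F := by
                have := hF _ h
                rwa [hanc i n, hxq _ _ hk] at this
              rw [Finset.sum_ite_eq]
              simp [h1]
          · exact zero_le
      _ = ∑ l ∈ F, ∑' k, (if par^[n] k = l then a (i + n) k else 0) :=
          Summable.tsum_finsetSum fun _ _ => ENNReal.summable
      _ = ∑ l ∈ F, a i l :=
          Finset.sum_congr rfl fun l _ => tsum_flow_add hpar hfib hw hK h0 i n l
      _ ≤ ∑ l ∈ F, w i / content q w K := Finset.sum_le_sum fun l _ => hale i l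
      _ = _ := by simp
  let P : ℕ → ProbabilityMeasure X := fun j => ⟨ν j, hprob j⟩
  have hcompact := isCompact_setOfPred_probabilityMeasure_mass_eq_compl_isCompact_le
    (E := X) (u := fun _ => 0) (K := fun _ => K) tendsto_const_nhds (fun _ => hKc)
    (Or.inl inferInstance)
  obtain ⟨μ, hμ, hlim⟩ := hcompact.ultrafilter_le_nhds (Ultrafilter.map P (hyperfilter ℕ)) (by
    rw [le_principal_iff]
    refine Filter.Eventually.of_forall (f := (hyperfilter ℕ : Filter ℕ)) fun j => ?_
    intro n
    have : ((P j) Kᶜ : ℝ≥0∞) = 0 := by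
      rw [ProbabilityMeasure.ennreal_coeFn_eq_coeFn_toMeasure]
      exact hsupp j
    exact (ENNReal.coe_eq_zero.1 this).le)
  have hlim' : Tendsto P (hyperfilter ℕ : Filter ℕ) (𝓝 μ) := hlim
  refine ⟨μ, inferInstance, ?_, fun i U F hU hF => ?_⟩
  · rw [← ProbabilityMeasure.ennreal_coeFn_eq_coeFn_toMeasure]
    exact ENNReal.coe_eq_zero.2 (nonpos_iff_eq_zero.1 (hμ 0))
  · refine (ProbabilityMeasure.le_liminf_measure_open_of_tendsto hlim' hU).trans ?_
    have hev : ∀ᶠ j in (hyperfilter ℕ : Filter ℕ), (P j : Measure X) U ≤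
        F.card * (w i / content q w K) := by
      refine Nat.hyperfilter_le_atTop ?_
      filter_upwards [eventually_ge_atTop i] with j hj
      obtain ⟨n, rfl⟩ := Nat.exists_eq_add_of_le hj
      exact hbound i n U F hU hF
    exact liminf_le_of_frequently_le' hev.frequently

end Frostman

/-! ### Frostman measures on Borel subsets of the plane squared -/

/-- The plane with its Euclidean norm. -/
abbrev V := EuclideanSpace ℝ (Fin 2)

/-- The product of two planes; its metric is the maximum of the two Euclidean ones. -/
abbrev P := V × V

/-- Indices of the dyadic cubes of a generation. -/
abbrev Idx := (Fin 2 → ℤ) × (Fin 2 → ℤ)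

/-- The dyadic cube of generation `j` (side length `2⁻ʲ`) containing a point. -/
noncomputable def dy (j : ℕ) (p : P) : Idx :=
  (fun i => ⌊2 ^ j * p.1 i⌋, fun i => ⌊2 ^ j * p.2 i⌋)

/-- The parent of a dyadic cube. -/
def dpar (m : Idx) : Idx := (fun i => m.1 i / 2, fun i => m.2 i / 2)

/-- The weight `2⁻ʲˢ` of a dyadic cube of generation `j`. -/
noncomputable def dw (s : ℝ) (j : ℕ) : ℝ≥0∞ := ENNReal.ofReal ((1 / 2) ^ j) ^ s

lemma dy_eq (j : ℕ) (p : P) : dy j p = dpar (dy (j + 1) p) := by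
  have h : ∀ x : ℝ, ⌊2 ^ j * x⌋ = ⌊2 ^ (j + 1) * x⌋ / 2 := fun x => by
    have := Int.floor_div_natCast (2 ^ (j + 1) * x) 2
    rw [Nat.cast_ofNat, Nat.cast_ofNat] at this
    rw [← this]
    congr 1
    rw [pow_succ]
    ring
  ext i <;> simp [dy, dpar, h]

lemma dpar_fiber (m : Idx) : (dpar ⁻¹' {m}).Finite := by
  have h : dpar ⁻¹' {m} ⊆ Set.Icc (fun i => 2 * m.1 i) (fun i => 2 * m.1 i + 1) ×ˢ
      Set.Icc (fun i => 2 * m.2 i) (fun i => 2 * m.2 i + 1) := by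
    rintro l rfl
    refine ⟨⟨fun i => ?_, fun i => ?_⟩, ⟨fun i => ?_, fun i => ?_⟩⟩ <;>
    · simp only [dpar]
      omega
  exact ((Set.finite_Icc _ _).prod (Set.finite_Icc _ _)).subset h

lemma dist_le_of_coord {x y : V} {r : ℝ} (h : ∀ i, |x i - y i| ≤ r) : dist x y ≤ 2 * r := by
  have hr : 0 ≤ r := (abs_nonneg _).trans (h 0)
  rw [EuclideanSpace.dist_eq]
  refine Real.sqrt_le_iff.2 ⟨by positivity, ?_⟩
  rw [Fin.sum_univ_two, Real.dist_eq, Real.dist_eq]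
  have h0 := pow_le_pow_left₀ (abs_nonneg _) (h 0) 2
  have h1 := pow_le_pow_left₀ (abs_nonneg _) (h 1) 2
  nlinarith

lemma abs_coord_le (x y : V) (i : Fin 2) : |x i - y i| ≤ dist x y := by
  rw [dist_eq_norm, ← Real.norm_eq_abs]
  exact PiLp.norm_apply_le (x - y) i

lemma abs_sub_le_of_floor {j : ℕ} {a b : ℝ} (h : ⌊2 ^ j * a⌋ = ⌊2 ^ j * b⌋) :
    |a - b| ≤ (1 / 2) ^ j := by
  have h1 := Int.abs_sub_lt_one_of_floor_eq_floor h
  rw [← mul_sub, abs_mul, abs_of_pos (by positivity : (0 : ℝ) < 2 ^ j)] at h1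
  rw [one_div, inv_pow, ← one_div, le_div_iff₀ (by positivity)]
  linarith

lemma dist_le_of_dy {j : ℕ} {p z : P} (h : dy j p = dy j z) : dist p z ≤ 2 * (1 / 2) ^ j := by
  simp only [dy, Prod.mk.injEq, funext_iff] at h
  exact max_le (dist_le_of_coord fun i => abs_sub_le_of_floor (h.1 i))
    (dist_le_of_coord fun i => abs_sub_le_of_floor (h.2 i))

lemma floor_mem_of_abs {j : ℕ} {a b : ℝ} (h : |a - b| < 3 * (1 / 2) ^ j) :
    -4 ≤ ⌊2 ^ j * a⌋ - ⌊2 ^ j * b⌋ ∧ ⌊2 ^ j * a⌋ - ⌊2 ^ j * b⌋ ≤ 4 := by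
  have h2 : (0 : ℝ) < 2 ^ j := by positivity
  have h1 : |2 ^ j * a - 2 ^ j * b| < 3 := by
    rw [← mul_sub, abs_mul, abs_of_pos h2]
    calc 2 ^ j * |a - b| < 2 ^ j * (3 * (1 / 2) ^ j) := by gcongr
      _ = 3 * (2 * (1 / 2)) ^ j := by rw [mul_pow]; ring
      _ = 3 := by norm_num
  rw [abs_lt] at h1
  have a1 := Int.floor_le (2 ^ j * a)
  have a2 := Int.lt_floor_add_one (2 ^ j * a)
  have b1 := Int.floor_le (2 ^ j * b)
  have b2 := Int.lt_floor_add_one (2 ^ j * b)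
  constructor
  · have : (-4 : ℝ) < (⌊2 ^ j * a⌋ - ⌊2 ^ j * b⌋ : ℤ) := by push_cast; linarith
    exact le_of_lt (by exact_mod_cast this)
  · have : ((⌊2 ^ j * a⌋ - ⌊2 ^ j * b⌋ : ℤ) : ℝ) < 4 := by push_cast; linarith
    exact le_of_lt (by exact_mod_cast this)

/-- The indices whose coordinates are at most `4` in absolute value. -/
noncomputable def box : Finset Idx :=
  Finset.Icc (fun _ => -4) (fun _ => 4) ×ˢ Finset.Icc (fun _ => -4) (fun _ => 4)

/-- A ball of radius `3 * 2⁻ʲ` meets a bounded number of dyadic cubes of generation `j`. -/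
lemma exists_cubes (j : ℕ) (z : P) : ∃ F : Finset Idx, F.card ≤ box.card ∧
    ∀ x ∈ Metric.ball z (3 * (1 / 2) ^ j), dy j x ∈ F := by
  classical
  refine ⟨box.image (· + dy j z), Finset.card_image_le, fun x hx => ?_⟩
  rw [Finset.mem_image]
  refine ⟨dy j x - dy j z, ?_, sub_add_cancel _ _⟩
  rw [Metric.mem_ball] at hx
  have h1 : ∀ i, |x.1 i - z.1 i| < 3 * (1 / 2) ^ j := fun i =>
    ((abs_coord_le _ _ i).trans (le_max_left _ _)).trans_lt hx
  have h2 : ∀ i, |x.2 i - z.2 i| < 3 * (1 / 2) ^ j := fun i =>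
    ((abs_coord_le _ _ i).trans (le_max_right _ _)).trans_lt hx
  rw [box, Finset.mem_product, Finset.mem_Icc, Finset.mem_Icc]
  exact ⟨⟨fun i => (floor_mem_of_abs (h1 i)).1, fun i => (floor_mem_of_abs (h1 i)).2⟩,
    ⟨fun i => (floor_mem_of_abs (h2 i)).1, fun i => (floor_mem_of_abs (h2 i)).2⟩⟩

lemma dw_ne_top {s : ℝ} (hs : 0 < s) (j : ℕ) : dw s j ≠ ∞ :=
  ENNReal.rpow_ne_top_of_nonneg hs.le ENNReal.ofReal_ne_top

lemma tendsto_half_pow : Tendsto (fun n : ℕ => ENNReal.ofReal ((1 / 2) ^ n)) atTop (𝓝 0) := by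
  rw [← ENNReal.ofReal_zero]
  exact ENNReal.tendsto_ofReal (tendsto_pow_atTop_nhds_zero_of_lt_one (by norm_num) (by norm_num))

/-- Covers by cubes of small total weight use small cubes only, so that sets of net content zero
are null for the Hausdorff measure. -/
lemma hausdorffMeasure_eq_zero_of_content {s : ℝ} (hs : 0 < s) {E : Set P}
    (h : content dy (dw s) E = 0) : μH[s] E = 0 := by
  have hpos : ∀ n, 0 < dw s n := fun n =>
    ENNReal.rpow_pos (ENNReal.ofReal_pos.2 (by positivity)) ENNReal.ofReal_ne_top
  have hC : ∀ n : ℕ, ∃ C, E ⊆ cov dy C ∧ wt (dw s) C < dw s n := fun n =>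
    exists_cov (h ▸ hpos n)
  choose C hEC hCw using hC
  have hlt : ∀ n, ∀ a ∈ C n, n ≤ a.1 := by
    intro n a ha
    by_contra hna
    have h1 : dw s a.1 ≤ wt (dw s) (C n) := by
      unfold wt
      refine le_trans ?_ (ENNReal.le_tsum a)
      rw [indicator_of_mem ha]
    have h2 : dw s n ≤ dw s a.1 := by
      refine ENNReal.rpow_le_rpow (ENNReal.ofReal_le_ofReal ?_) hs.le
      exact pow_le_pow_of_le_one (by norm_num) (by norm_num) (not_le.1 hna).le
    exact absurd (h2.trans h1) (not_le.2 (hCw n))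
  have hdiam : ∀ a : ℕ × Idx, Metric.ediam {x | dy a.1 x = a.2} ≤
      2 * ENNReal.ofReal ((1 / 2) ^ a.1) := by
    intro a
    refine Metric.ediam_le fun x hx y hy => ?_
    rw [edist_dist]
    refine (ENNReal.ofReal_le_ofReal (dist_le_of_dy (hx.trans hy.symm))).trans_eq ?_
    rw [ENNReal.ofReal_mul (by norm_num), ENNReal.ofReal_ofNat]
  have hT : Tendsto (fun n : ℕ => 2 * ENNReal.ofReal ((1 / 2) ^ n)) atTop (𝓝 0) := by
    simpa using ENNReal.Tendsto.const_mul (a := 2) tendsto_half_pow (Or.inr (by simp))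
  have hmain := Measure.hausdorffMeasure_le_liminf_tsum (ι := fun n => C n) s E
    (fun n : ℕ => 2 * ENNReal.ofReal ((1 / 2) ^ n)) hT (fun n a => {x | dy a.1.1 x = a.1.2})
    (Eventually.of_forall fun n a => (hdiam a.1).trans (mul_le_mul_right
      (ENNReal.ofReal_le_ofReal (pow_le_pow_of_le_one (by norm_num) (by norm_num)
        (hlt n a.1 a.2))) _))
    (Eventually.of_forall fun n x hx => by
      obtain ⟨j, hj⟩ := hEC n hx
      exact mem_iUnion.2 ⟨⟨_, hj⟩, rfl⟩)
  refine le_antisymm (hmain.trans ?_) zero_le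
  have hbd : ∀ n, ∑' a : C n, Metric.ediam {x | dy a.1.1 x = a.1.2} ^ s ≤
      2 ^ s * dw s n := by
    intro n
    calc ∑' a : C n, Metric.ediam {x | dy a.1.1 x = a.1.2} ^ s
        ≤ ∑' a : C n, 2 ^ s * dw s a.1.1 := by
          refine ENNReal.tsum_le_tsum fun a => ?_
          rw [dw, ← ENNReal.mul_rpow_of_nonneg _ _ hs.le]
          exact ENNReal.rpow_le_rpow (hdiam a.1) hs.le
      _ = 2 ^ s * wt (dw s) (C n) := by
          rw [ENNReal.tsum_mul_left, wt, tsum_subtype (C n) fun a => dw s a.1]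
      _ ≤ _ := by gcongr; exact (hCw n).le
  have hT2 : Tendsto (fun n : ℕ => 2 ^ s * dw s n) atTop (𝓝 0) := by
    have h1 : Tendsto (fun n : ℕ => dw s n) atTop (𝓝 0) := by
      have := (ENNReal.continuous_rpow_const (y := s)).tendsto 0 |>.comp tendsto_half_pow
      rwa [ENNReal.zero_rpow_of_pos hs] at this
    simpa using ENNReal.Tendsto.const_mul (a := (2 : ℝ≥0∞) ^ s) h1
      (Or.inr (ENNReal.rpow_ne_top_of_nonneg hs.le (by simp)))
  exact (liminf_le_liminf (Eventually.of_forall hbd)).trans hT2.liminf_eq.le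

/-- Frostman's lemma for Borel sets. -/
lemma exists_frostman {A : Set P} (hA : MeasurableSet A) {s : NNReal} (hs : 0 < s)
    (hd : (s : ℝ≥0∞) < dimH A) : ∃ K ⊆ A, IsCompact K ∧ ∃ μ : Measure P, IsProbabilityMeasure μ ∧
      μ Kᶜ = 0 ∧ ∃ C : ℝ≥0∞, C ≠ ∞ ∧ ∀ (z : P) (r : ℝ), 0 < r →
        μ (Metric.closedBall z r) ≤ C * ENNReal.ofReal r ^ (s : ℝ) := by
  have hs' : (0 : ℝ) < s := hs
  have htop := hausdorffMeasure_of_lt_dimH hd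
  have hdym : ∀ j, Measurable (dy j) := by
    intro j
    refine Measurable.prodMk (measurable_pi_lambda _ fun i => ?_) (measurable_pi_lambda _ fun i => ?_)
    · exact Int.measurable_floor.comp (by fun_prop)
    · exact Int.measurable_floor.comp (by fun_prop)
  obtain ⟨k₀, hk₀⟩ : ∃ k₀, μH[(s : ℝ)] (A ∩ {x | dy 0 x = k₀}) ≠ 0 := by
    by_contra! hcon
    have h1 : A = ⋃ k, A ∩ {x | dy 0 x = k} := by ext x; simp
    rw [h1, measure_iUnion_null hcon] at htop
    exact ENNReal.zero_ne_top htop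
  set E := A ∩ {x | dy 0 x = k₀} with hE
  have hEm : MeasurableSet E := hA.inter (hdym 0 (measurableSet_singleton k₀))
  have hE0 : 0 < content dy (dw s) E := pos_iff_ne_zero.2 fun h =>
    hk₀ (hausdorffMeasure_eq_zero_of_content hs' h)
  obtain ⟨K, hKE, hKc, hK0⟩ := exists_compact_content_pos (q := dy) (w := dw s)
    (fun j x y h => by rw [dy_eq, h, ← dy_eq]) box.card (fun j k => by
      by_cases hk : ∃ z, dy j z = k
      · obtain ⟨z, rfl⟩ := hk
        obtain ⟨F, hF, hF2⟩ := exists_cubes j z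
        refine ⟨Metric.ball z (3 * (1 / 2) ^ j), Metric.isOpen_ball, fun x hx => ?_, F, hF, hF2⟩
        refine (dist_le_of_dy hx).trans_lt ?_
        have : (0 : ℝ) < (1 / 2) ^ j := by positivity
        linarith
      · exact ⟨∅, isOpen_empty, fun x hx => hk ⟨x, hx⟩, ∅, by simp, by simp⟩)
    hEm.analyticSet hE0
  obtain ⟨μ, hμ, hμK, hμb⟩ := exists_frostman_compact (q := dy) (w := dw s) (par := dpar)
    dy_eq dpar_fiber (dw_ne_top hs') hKc (fun x hx => (hKE hx).2) hK0.ne'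
  refine ⟨K, hKE.trans inter_subset_left, hKc, μ, hμ, hμK,
    box.card * (2 ^ (s : ℝ) / content dy (dw s) K) + 1, ?_, fun z r hr => ?_⟩
  · refine ENNReal.add_ne_top.2 ⟨ENNReal.mul_ne_top (ENNReal.natCast_ne_top _) (ENNReal.div_ne_top ?_ hK0.ne'),
      ENNReal.one_ne_top⟩
    exact ENNReal.rpow_ne_top_of_nonneg hs'.le (by simp)
  rcases le_or_gt r 1 with hr1 | hr1
  · obtain ⟨j, hj1, hj2⟩ := exists_nat_pow_near_of_lt_one hr hr1 (by norm_num : (0 : ℝ) < 1 / 2)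
      (by norm_num)
    obtain ⟨F, hF, hF2⟩ := exists_cubes j z
    have hsub : Metric.closedBall z r ⊆ Metric.ball z (3 * (1 / 2) ^ j) := by
      refine Metric.closedBall_subset_ball ?_
      have : (0 : ℝ) < (1 / 2) ^ j := by positivity
      linarith
    have hw : dw s j ≤ 2 ^ (s : ℝ) * ENNReal.ofReal r ^ (s : ℝ) := by
      rw [← ENNReal.mul_rpow_of_nonneg _ _ hs'.le, dw]
      refine ENNReal.rpow_le_rpow ?_ hs'.le
      rw [← ENNReal.ofReal_ofNat 2, ← ENNReal.ofReal_mul (by norm_num)]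
      refine ENNReal.ofReal_le_ofReal ?_
      rw [pow_succ] at hj1
      linarith
    calc μ (Metric.closedBall z r) ≤ μ (Metric.ball z (3 * (1 / 2) ^ j)) := measure_mono hsub
      _ ≤ F.card * (dw s j / content dy (dw s) K) := hμb j _ F Metric.isOpen_ball hF2
      _ ≤ box.card * ((2 ^ (s : ℝ) * ENNReal.ofReal r ^ (s : ℝ)) / content dy (dw s) K) := by
          gcongr
      _ = box.card * (2 ^ (s : ℝ) / content dy (dw s) K) * ENNReal.ofReal r ^ (s : ℝ) := by
          simp only [div_eq_mul_inv]; ring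
      _ ≤ _ := by gcongr; exact le_self_add
  · calc μ (Metric.closedBall z r) ≤ 1 := prob_le_one
      _ ≤ 1 * ENNReal.ofReal r ^ (s : ℝ) := by
          rw [one_mul]
          refine ENNReal.one_le_rpow ?_ hs'
          rw [← ENNReal.ofReal_one]
          exact ENNReal.ofReal_le_ofReal hr1.le
      _ ≤ _ := by gcongr; exact le_add_self

/-! ### Gaussian averages of a Frostman measure -/

/-- The square of the Euclidean norm of `P = ℝ⁴`. -/
noncomputable def n2 (z : P) : ℝ := ‖z.1‖ ^ 2 + ‖z.2‖ ^ 2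

lemma n2_nonneg (z : P) : 0 ≤ n2 z := by unfold n2; positivity

@[fun_prop]
lemma continuous_n2 : Continuous n2 := by unfold n2; fun_prop

lemma sq_dist_le_n2 (z w : P) : dist z w ^ 2 ≤ n2 (z - w) := by
  unfold n2
  rcases max_cases (dist z.1 w.1) (dist z.2 w.2) with ⟨h, _⟩ | ⟨h, _⟩
  · rw [Prod.dist_eq, h, dist_eq_norm]
    simp
  · rw [Prod.dist_eq, h, dist_eq_norm]
    simp

lemma exists_rpow_le_exp {b c : ℝ} (hb : 0 ≤ b) (hc : 0 < c) :
    ∃ C : ℝ, 0 < C ∧ ∀ x, 0 ≤ x → (1 + x) ^ b ≤ C * Real.exp (c * x) := by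
  refine ⟨(1 + (b + 1) / c) ^ b, by positivity, fun x hx => ?_⟩
  have h1 : 1 + x ≤ (1 + (b + 1) / c) * Real.exp (c * x / (b + 1)) := by
    have e1 : 1 ≤ Real.exp (c * x / (b + 1)) := Real.one_le_exp (by positivity)
    have e2 : c * x / (b + 1) ≤ Real.exp (c * x / (b + 1)) := by
      have := Real.add_one_le_exp (c * x / (b + 1))
      linarith
    have e3 : x = (b + 1) / c * (c * x / (b + 1)) := by field_simp
    have e4 : x ≤ (b + 1) / c * Real.exp (c * x / (b + 1)) := by
      conv_lhs => rw [e3]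
      gcongr
    linarith
  calc (1 + x) ^ b ≤ ((1 + (b + 1) / c) * Real.exp (c * x / (b + 1))) ^ b :=
        Real.rpow_le_rpow (by positivity) h1 hb
    _ = (1 + (b + 1) / c) ^ b * Real.exp (c * x / (b + 1) * b) := by
        rw [Real.mul_rpow (by positivity) (Real.exp_nonneg _), ← Real.exp_mul]
    _ ≤ _ := by
        refine mul_le_mul_of_nonneg_left (Real.exp_le_exp.2 ?_) (by positivity)
        rw [div_mul_eq_mul_div, div_le_iff₀ (by positivity)]
        have : 0 ≤ c * x := by positivity
        nlinarith

lemma tsum_gauss_ne_top {s : ℝ} (hs : 0 ≤ s) :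
    ∑' n : ℕ, ENNReal.ofReal (Real.exp (-(n : ℝ) ^ 2 / 4)) * ENNReal.ofReal (n + 1) ^ s ≠ ∞ := by
  obtain ⟨C, hC, h⟩ := exists_rpow_le_exp hs (by norm_num : (0 : ℝ) < 1 / 8)
  have hsum : Summable fun n : ℕ => C * Real.exp (-1 / 8) ^ n :=
    (summable_geometric_of_lt_one (Real.exp_nonneg _) (by rw [Real.exp_lt_one_iff]; norm_num)).mul_left
      C
  refine ne_top_of_le_ne_top hsum.tsum_ofReal_ne_top (ENNReal.tsum_le_tsum fun n => ?_)
  rw [ENNReal.ofReal_rpow_of_pos (by positivity), ← ENNReal.ofReal_mul (Real.exp_nonneg _)]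
  refine ENNReal.ofReal_le_ofReal ?_
  have hn : (n : ℝ) ≤ (n : ℝ) ^ 2 := by exact_mod_cast Nat.le_self_pow two_ne_zero n
  calc Real.exp (-(n : ℝ) ^ 2 / 4) * (n + 1 : ℝ) ^ s
      ≤ Real.exp (-(n : ℝ) / 4) * (C * Real.exp (1 / 8 * n)) := by
        gcongr
        rw [add_comm]
        exact h n (Nat.cast_nonneg n)
    _ = C * Real.exp (-1 / 8) ^ n := by
        rw [← Real.exp_nat_mul, mul_left_comm, ← Real.exp_add]
        congr 2
        ring

/-- The average of a Gaussian of width `√τ` against a measure of Frostman exponent `s` is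
`O(τ^(s/2))`, as one sees by summing over the shells `n√τ ≤ dist z w < (n + 1)√τ`. -/
lemma exists_gauss_le {μ : Measure P} [IsProbabilityMeasure μ] {s : ℝ} (hs : 0 < s) {C : ℝ≥0∞}
    (hC : C ≠ ∞) (h : ∀ (z : P) (r : ℝ), 0 < r →
      μ (Metric.closedBall z r) ≤ C * ENNReal.ofReal r ^ s) :
    ∃ D : ℝ≥0∞, D ≠ ∞ ∧ ∀ τ : ℝ, 0 < τ →
      ∫⁻ z, ∫⁻ w, ENNReal.ofReal (Real.exp (-n2 (z - w) / (4 * τ))) ∂μ ∂μ ≤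
        D * ENNReal.ofReal (τ ^ (s / 2)) := by
  refine ⟨C * ∑' n : ℕ, ENNReal.ofReal (Real.exp (-(n : ℝ) ^ 2 / 4)) *
    ENNReal.ofReal (n + 1) ^ s, ENNReal.mul_ne_top hC (tsum_gauss_ne_top hs.le), fun τ hτ => ?_⟩
  set r := √τ with hr
  have hr0 : 0 < r := Real.sqrt_pos.2 hτ
  have hrτ : r ^ 2 = τ := Real.sq_sqrt hτ.le
  have hrs : ENNReal.ofReal r ^ s = ENNReal.ofReal (τ ^ (s / 2)) := by
    rw [ENNReal.ofReal_rpow_of_pos hr0, hr, Real.sqrt_eq_rpow, ← Real.rpow_mul hτ.le]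
    congr 2
    ring
  have hz : ∀ z, ∫⁻ w, ENNReal.ofReal (Real.exp (-n2 (z - w) / (4 * τ))) ∂μ ≤
      C * (∑' n : ℕ, ENNReal.ofReal (Real.exp (-(n : ℝ) ^ 2 / 4)) *
        ENNReal.ofReal (n + 1) ^ s) * ENNReal.ofReal (τ ^ (s / 2)) := by
    intro z
    calc ∫⁻ w, ENNReal.ofReal (Real.exp (-n2 (z - w) / (4 * τ))) ∂μ
        ≤ ∫⁻ w, ∑' n : ℕ, (Metric.closedBall z ((n + 1) * r)).indicator
            (fun _ => ENNReal.ofReal (Real.exp (-(n : ℝ) ^ 2 / 4))) w ∂μ := by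
          refine lintegral_mono fun w => ?_
          set n := ⌊dist z w / r⌋₊ with hn
          have h1 : (n : ℝ) * r ≤ dist z w :=
            (le_div_iff₀ hr0).1 (Nat.floor_le (by positivity))
          have h2 : dist z w ≤ (n + 1) * r :=
            ((div_lt_iff₀ hr0).1 (Nat.lt_floor_add_one _)).le
          refine le_trans ?_ (ENNReal.le_tsum n)
          rw [indicator_of_mem (by rwa [Metric.mem_closedBall, dist_comm])]
          refine ENNReal.ofReal_le_ofReal (Real.exp_le_exp.2 ?_)
          have h3 : ((n : ℝ) * r) ^ 2 ≤ n2 (z - w) :=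
            (pow_le_pow_left₀ (by positivity) h1 2).trans (sq_dist_le_n2 z w)
          rw [mul_pow, hrτ] at h3
          rw [div_le_div_iff₀ (by positivity) (by norm_num)]
          nlinarith
      _ = ∑' n : ℕ, ENNReal.ofReal (Real.exp (-(n : ℝ) ^ 2 / 4)) *
            μ (Metric.closedBall z ((n + 1) * r)) := by
          rw [lintegral_tsum fun n =>
            (measurable_const.indicator Metric.isClosed_closedBall.measurableSet).aemeasurable]
          refine tsum_congr fun n => ?_
          rw [lintegral_indicator_const Metric.isClosed_closedBall.measurableSet]
      _ ≤ ∑' n : ℕ, C * ((ENNReal.ofReal (Real.exp (-(n : ℝ) ^ 2 / 4)) *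
            ENNReal.ofReal (n + 1) ^ s) * ENNReal.ofReal (τ ^ (s / 2))) := by
          refine ENNReal.tsum_le_tsum fun n => ?_
          refine (mul_le_mul_right (h z ((n + 1) * r) (by positivity)) _).trans_eq ?_
          rw [ENNReal.ofReal_mul (by positivity), ENNReal.mul_rpow_of_nonneg _ _ hs.le, hrs]
          ring
      _ = _ := by rw [ENNReal.tsum_mul_left, ENNReal.tsum_mul_right, mul_assoc]
  refine (lintegral_mono hz).trans ?_
  rw [lintegral_const, measure_univ, mul_one]

/-! ### Energies in terms of the Fourier transform -/

/-- The inner product of `P = ℝ⁴`, which is not the one of a Mathlib instance. -/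
noncomputable def dot (v ζ : P) : ℝ := inner ℝ v.1 ζ.1 + inner ℝ v.2 ζ.2

/-- The character of `P` with frequency `ζ`. -/
noncomputable def ch (v ζ : P) : ℂ := Complex.exp (Complex.I * (dot v ζ : ℝ))

/-- The squared modulus of the Fourier transform of a measure. -/
noncomputable def ft2 (μ : Measure P) (ζ : P) : ℝ := ‖∫ x, ch x ζ ∂μ‖ ^ 2

lemma continuous_ch : Continuous fun p : P × P => ch p.1 p.2 := by
  unfold ch dot; fun_prop

lemma norm_ch (v ζ : P) : ‖ch v ζ‖ = 1 := by
  rw [ch, mul_comm, Complex.norm_exp_ofReal_mul_I]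

lemma ch_sub (x y ζ : P) : ch (x - y) ζ = ch x ζ * (starRingEnd ℂ) (ch y ζ) := by
  simp only [ch, dot, Prod.fst_sub, Prod.snd_sub, inner_sub_left, ← Complex.exp_conj, map_mul,
    Complex.conj_I, Complex.conj_ofReal, ← Complex.exp_add]
  congr 1
  push_cast
  ring

lemma measurable_ft2 (μ : Measure P) [IsProbabilityMeasure μ] : Measurable (ft2 μ) := by
  have h : StronglyMeasurable fun ζ => ∫ x, ch x ζ ∂μ :=
    StronglyMeasurable.integral_prod_right (f := fun ζ x => ch x ζ)
      (continuous_ch.comp continuous_swap).stronglyMeasurable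
  exact h.measurable.norm.pow_const 2

lemma ft2_nonneg (μ : Measure P) (ζ : P) : 0 ≤ ft2 μ ζ := sq_nonneg _

lemma integral_ch_sub (μ : Measure P) [IsProbabilityMeasure μ] (ζ : P) :
    ∫ p, ch (p.1 - p.2) ζ ∂(μ.prod μ) = (ft2 μ ζ : ℂ) := by
  simp only [ch_sub]
  rw [integral_prod_mul (fun x => ch x ζ) fun y => (starRingEnd ℂ) (ch y ζ), integral_conj,
    Complex.mul_conj, ft2, Complex.normSq_eq_norm_sq]

/-- Parseval's formula: a kernel `κ` that is the Fourier transform of a positive measure (here the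
image of `g • γ` under `Z`) has energy equal to the integral of `|μ̂|²` for that measure. -/
lemma energy_eq {Ω : Type*} [MeasurableSpace Ω] {γ : Measure Ω} [SFinite γ] (μ : Measure P)
    [IsProbabilityMeasure μ] {g : Ω → ℝ} (hg : Integrable g γ) (hg0 : ∀ ω, 0 ≤ g ω)
    {Z : Ω → P} (hZ : Measurable Z) {κ : P → ℝ} (hκ0 : ∀ v, 0 ≤ κ v) (hκ : Measurable κ)
    (h : ∀ v, ∫ ω, (g ω : ℂ) * ch v (Z ω) ∂γ = κ v) :
    ∫⁻ z, ∫⁻ w, ENNReal.ofReal (κ (z - w)) ∂μ ∂μ =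
      ∫⁻ ω, ENNReal.ofReal (g ω) * ENNReal.ofReal (ft2 μ (Z ω)) ∂γ := by
  have hInt : Integrable (Function.uncurry fun (p : P × P) (ω : Ω) =>
      (g ω : ℂ) * ch (p.1 - p.2) (Z ω)) ((μ.prod μ).prod γ) := by
    have h1 : Integrable (fun q : (P × P) × Ω => (g q.2 : ℂ)) ((μ.prod μ).prod γ) := by
      simpa using (integrable_const (1 : ℂ)).mul_prod (μ := μ.prod μ) hg.ofReal
    refine h1.mono (h1.aestronglyMeasurable.mul ?_) (Eventually.of_forall fun q => ?_)
    · have : Measurable fun q : (P × P) × Ω => (q.1.1 - q.1.2, Z q.2) := by fun_prop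
      exact (continuous_ch.measurable.comp this).aestronglyMeasurable
    · simp [Function.uncurry, norm_ch]
  have hfst : ∀ p : P × P, ∫ ω, (g ω : ℂ) * ch (p.1 - p.2) (Z ω) ∂γ = κ (p.1 - p.2) :=
    fun p => h _
  have hsnd : ∀ ω, ∫ p : P × P, (g ω : ℂ) * ch (p.1 - p.2) (Z ω) ∂(μ.prod μ) =
      ((g ω * ft2 μ (Z ω) : ℝ) : ℂ) := fun ω => by
    rw [integral_const_mul, integral_ch_sub]
    push_cast
    rfl
  have hI1 : Integrable (fun p : P × P => κ (p.1 - p.2)) (μ.prod μ) := by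
    have := hInt.integral_prod_left.re
    simpa [Function.uncurry, hfst] using this
  have hI2 : Integrable (fun ω => g ω * ft2 μ (Z ω)) γ := by
    have := hInt.integral_prod_right.re
    simpa only [Function.uncurry, hsnd, RCLike.re_eq_complex_re, Complex.ofReal_re] using this
  have key := integral_integral_swap hInt
  simp only [hfst, hsnd] at key
  rw [integral_complex_ofReal, integral_complex_ofReal, Complex.ofReal_inj] at key
  have e1 := ofReal_integral_eq_lintegral_ofReal hI1 (Eventually.of_forall fun p => hκ0 _)
  have e2 := ofReal_integral_eq_lintegral_ofReal hI2
    (Eventually.of_forall fun ω => mul_nonneg (hg0 ω) (ft2_nonneg μ _))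
  rw [key, e2, lintegral_prod _ (by fun_prop)] at e1
  rw [← e1]
  exact lintegral_congr fun ω => ENNReal.ofReal_mul (hg0 ω)

lemma integrable_gaussV {b : ℝ} (hb : 0 < b) :
    Integrable fun ξ : V => Real.exp (-(b * ‖ξ‖ ^ 2)) := by
  have := (GaussianFourier.integrable_cexp_neg_mul_sq_norm_add (V := V) (b := b) (by simpa) 0 0).re
  refine this.congr (Eventually.of_forall fun ξ => ?_)
  simp only [zero_mul, add_zero, RCLike.re_eq_complex_re]
  rw [← Complex.ofReal_re (Real.exp _)]
  push_cast
  simp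

/-- The Fourier transform of a Gaussian on the plane. -/
lemma integral_gaussV {b : ℝ} (hb : 0 < b) (u : V) :
    ∫ ξ : V, (Real.exp (-(b * ‖ξ‖ ^ 2)) : ℂ) * Complex.exp (Complex.I * (inner ℝ u ξ : ℝ)) =
      ((Real.pi / b * Real.exp (-(‖u‖ ^ 2 / (4 * b))) : ℝ) : ℂ) := by
  have := GaussianFourier.integral_cexp_neg_mul_sq_norm_add (V := V) (b := b) (by simpa) Complex.I u
  rw [finrank_euclideanSpace_fin] at this
  push_cast at this ⊢
  convert this using 1
  · refine integral_congr_ae (Eventually.of_forall fun ξ => ?_)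
    simp only
    rw [← Complex.exp_add]
    congr 1
    ring
  · norm_num
    left
    congr 1
    ring

lemma integrable_gaussP {c : ℝ} (hc : 0 < c) : Integrable fun ζ : P => Real.exp (-(c * n2 ζ)) := by
  refine ((integrable_gaussV hc).mul_prod (integrable_gaussV hc)).congr
    (Eventually.of_forall fun ζ => ?_)
  simp only [← Real.exp_add, n2]
  congr 1
  ring

lemma integral_gaussP {c : ℝ} (hc : 0 < c) (v : P) :
    ∫ ζ : P, (Real.exp (-(c * n2 ζ)) : ℂ) * ch v ζ =
      (((Real.pi / c) ^ 2 * Real.exp (-(n2 v / (4 * c))) : ℝ) : ℂ) := by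
  have h : ∀ ζ : P, (Real.exp (-(c * n2 ζ)) : ℂ) * ch v ζ =
      ((Real.exp (-(c * ‖ζ.1‖ ^ 2)) : ℂ) * Complex.exp (Complex.I * (inner ℝ v.1 ζ.1 : ℝ))) *
      ((Real.exp (-(c * ‖ζ.2‖ ^ 2)) : ℂ) * Complex.exp (Complex.I * (inner ℝ v.2 ζ.2 : ℝ))) := by
    intro ζ
    push_cast
    simp only [ch, dot, n2, ← Complex.exp_add]
    congr 1
    push_cast
    ring
  simp only [h]
  refine (integral_prod_mul (μ := (volume : Measure V)) (ν := (volume : Measure V))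
    (fun x => (Real.exp (-(c * ‖x‖ ^ 2)) : ℂ) * Complex.exp (Complex.I * (inner ℝ v.1 x : ℝ)))
    (fun x => (Real.exp (-(c * ‖x‖ ^ 2)) : ℂ) * Complex.exp (Complex.I * (inner ℝ v.2 x : ℝ)))).trans ?_
  rw [integral_gaussV hc, integral_gaussV hc, ← Complex.ofReal_mul]
  congr 1
  rw [n2, add_div, neg_add, Real.exp_add]
  ring

/-- Parseval's formula for the Gaussian of width `√τ`. -/
lemma ft2_gauss (μ : Measure P) [IsProbabilityMeasure μ] {τ : ℝ} (hτ : 0 < τ) :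
    ∫⁻ z, ∫⁻ w, ENNReal.ofReal ((Real.pi / τ) ^ 2 * Real.exp (-(n2 (z - w) / (4 * τ)))) ∂μ ∂μ =
      ∫⁻ ζ : P, ENNReal.ofReal (Real.exp (-(τ * n2 ζ))) * ENNReal.ofReal (ft2 μ ζ) :=
  energy_eq μ (integrable_gaussP hτ) (fun ζ => Real.exp_nonneg _) measurable_id
    (κ := fun v => (Real.pi / τ) ^ 2 * Real.exp (-(n2 v / (4 * τ)))) (fun v => by positivity)
    (by fun_prop) (integral_gaussP hτ)

/-- The weight `(1 + |ζ|²)^(-a)` is a superposition of Gaussians, with the Gamma integral. -/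
lemma lintegral_gamma {a x : ℝ} (ha : 0 < a) (hx : 0 ≤ x) :
    ∫⁻ τ in Ioi 0, ENNReal.ofReal (τ ^ (a - 1) * Real.exp (-τ)) *
      ENNReal.ofReal (Real.exp (-(τ * x))) =
      ENNReal.ofReal ((1 + x) ^ (-a)) * ENNReal.ofReal (Real.Gamma a) := by
  have hx1 : 0 < 1 + x := by linarith
  have h := Real.integral_rpow_mul_exp_neg_mul_Ioi ha hx1
  have hG := Real.Gamma_pos_of_pos ha
  have hInt : IntegrableOn (fun τ : ℝ => τ ^ (a - 1) * Real.exp (-((1 + x) * τ))) (Ioi 0) := by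
    by_contra hcon
    rw [integral_undef hcon] at h
    have : 0 < (1 / (1 + x)) ^ a * Real.Gamma a := by positivity
    linarith
  have h2 := ofReal_integral_eq_lintegral_ofReal hInt (by
    filter_upwards [ae_restrict_mem measurableSet_Ioi] with τ hτ
    have : (0 : ℝ) < τ := hτ
    positivity)
  rw [h] at h2
  rw [← ENNReal.ofReal_mul (by positivity), Real.rpow_neg hx1.le, ← Real.inv_rpow hx1.le,
    ← one_div, h2]
  refine setLIntegral_congr_fun measurableSet_Ioi fun τ hτ => ?_
  have : (0 : ℝ) < τ := hτ
  rw [← ENNReal.ofReal_mul (by positivity), mul_assoc, ← Real.exp_add]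
  congr 3
  ring

/-- A measure of Frostman exponent `s` has finite energy of every exponent `s' < s`. -/
lemma energy_ne_top {μ : Measure P} [IsProbabilityMeasure μ] {s s' : ℝ} (hs : s' < s)
    (hs4 : s' < 4) {D : ℝ≥0∞} (hD : D ≠ ∞)
    (h : ∀ τ : ℝ, 0 < τ → ∫⁻ z, ∫⁻ w, ENNReal.ofReal (Real.exp (-n2 (z - w) / (4 * τ))) ∂μ ∂μ ≤
        D * ENNReal.ofReal (τ ^ (s / 2))) :
    ∫⁻ ζ : P, ENNReal.ofReal ((1 + n2 ζ) ^ (-((4 - s') / 2))) * ENNReal.ofReal (ft2 μ ζ) ≠ ∞ := by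
  set a := (4 - s') / 2 with ha
  have ha0 : 0 < a := by rw [ha]; linarith
  have hG := Real.Gamma_pos_of_pos ha0
  have hG0 : ENNReal.ofReal (Real.Gamma a) ≠ 0 := (ENNReal.ofReal_pos.2 hG).ne'
  have hft := measurable_ft2 μ
  suffices hsuff : (∫⁻ ζ : P, ENNReal.ofReal ((1 + n2 ζ) ^ (-a)) * ENNReal.ofReal (ft2 μ ζ)) *
      ENNReal.ofReal (Real.Gamma a) ≠ ∞ by
    intro htop
    rw [htop, ENNReal.top_mul hG0] at hsuff
    exact hsuff rfl
  have hb : 0 < (s - s') / 2 := by linarith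
  have hfin : ∫⁻ τ in Ioi (0 : ℝ), ENNReal.ofReal (τ ^ ((s - s') / 2 - 1) * Real.exp (-τ)) ≠ ∞ := by
    have := lintegral_gamma hb le_rfl
    simp only [mul_zero, neg_zero, Real.exp_zero, ENNReal.ofReal_one, mul_one] at this
    rw [this]
    exact ENNReal.mul_ne_top ENNReal.ofReal_ne_top ENNReal.ofReal_ne_top
  refine ne_top_of_le_ne_top (ENNReal.mul_ne_top
    (ENNReal.mul_ne_top hD (ENNReal.ofReal_ne_top (r := Real.pi ^ 2))) hfin) ?_
  calc (∫⁻ ζ : P, ENNReal.ofReal ((1 + n2 ζ) ^ (-a)) * ENNReal.ofReal (ft2 μ ζ)) *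
        ENNReal.ofReal (Real.Gamma a)
      = ∫⁻ ζ : P, ∫⁻ τ in Ioi (0 : ℝ), ENNReal.ofReal (τ ^ (a - 1) * Real.exp (-τ)) *
          (ENNReal.ofReal (Real.exp (-(τ * n2 ζ))) * ENNReal.ofReal (ft2 μ ζ)) := by
        rw [← lintegral_mul_const _ (by fun_prop)]
        refine lintegral_congr fun ζ => ?_
        rw [mul_right_comm, ← lintegral_gamma ha0 (n2_nonneg ζ),
          ← lintegral_mul_const _ (by fun_prop)]
        simp only [mul_assoc]
    _ = ∫⁻ τ in Ioi (0 : ℝ), ENNReal.ofReal (τ ^ (a - 1) * Real.exp (-τ)) *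
          ∫⁻ ζ : P, ENNReal.ofReal (Real.exp (-(τ * n2 ζ))) * ENNReal.ofReal (ft2 μ ζ) := by
        rw [lintegral_lintegral_swap (by fun_prop)]
        refine lintegral_congr fun τ => ?_
        rw [lintegral_const_mul _ (by fun_prop)]
    _ ≤ ∫⁻ τ in Ioi (0 : ℝ), D * ENNReal.ofReal (Real.pi ^ 2) *
          ENNReal.ofReal (τ ^ ((s - s') / 2 - 1) * Real.exp (-τ)) := by
        refine setLIntegral_mono (by fun_prop) fun τ hτ => ?_
        have hτ0 : (0 : ℝ) < τ := hτ
        rw [← ft2_gauss μ hτ0]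
        have h1 : ∫⁻ z, ∫⁻ w, ENNReal.ofReal ((Real.pi / τ) ^ 2 *
            Real.exp (-(n2 (z - w) / (4 * τ)))) ∂μ ∂μ ≤
            ENNReal.ofReal ((Real.pi / τ) ^ 2) * (D * ENNReal.ofReal (τ ^ (s / 2))) := by
          refine le_trans (le_of_eq ?_) (mul_le_mul_right (h τ hτ0) _)
          rw [← lintegral_const_mul' _ _ ENNReal.ofReal_ne_top]
          refine lintegral_congr fun z => ?_
          rw [← lintegral_const_mul' _ _ ENNReal.ofReal_ne_top]
          refine lintegral_congr fun w => ?_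
          rw [ENNReal.ofReal_mul (by positivity), neg_div]
        refine (mul_le_mul_right h1 _).trans_eq ?_
        rw [show ∀ x y z w : ℝ≥0∞, x * (y * (z * w)) = z * (x * y * w) from
            fun x y z w => by ring, ← ENNReal.ofReal_mul (by positivity),
          ← ENNReal.ofReal_mul (by positivity), mul_assoc D, ← ENNReal.ofReal_mul (by positivity)]
        congr 2
        have e1 : τ ^ ((s - s') / 2 - 1) = τ ^ (a - 1) * τ ^ (s / 2) / τ ^ 2 := by
          rw [← Real.rpow_natCast τ 2, ← Real.rpow_add hτ0, ← Real.rpow_sub hτ0]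
          congr 1
          rw [ha]
          push_cast
          ring
        rw [e1]
        field_simp
    _ = _ := lintegral_const_mul' _ _ (ENNReal.mul_ne_top hD ENNReal.ofReal_ne_top)

/-- The projection `(x, y) ↦ x + t y`. -/
noncomputable def pt (t : ℝ) (p : P) : V := p.1 + t • p.2

lemma pt_sub (t : ℝ) (p z : P) : pt t (p - z) = pt t p - pt t z := by
  simp only [pt, Prod.fst_sub, Prod.snd_sub, smul_sub]
  abel

@[fun_prop]
lemma continuous_pt (t : ℝ) : Continuous (pt t) := by unfold pt; fun_prop

/-- The weight of the frequency `ζ` in the energy of a measure projected by `pt t` at scale `δ`: a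
Gaussian measure of width `δ⁻¹` on the plane `{(ξ, tξ)}`, thickened at unit scale. -/
noncomputable def kern (δ t : ℝ) (ζ : P) : ℝ≥0∞ :=
  ∫⁻ ξ : V, ENNReal.ofReal (Real.exp (-(δ ^ 2 / 2 * ‖ξ‖ ^ 2)) *
    Real.exp (-(1 / 2 * n2 (ζ - (ξ, t • ξ)))))

/-- Parseval's formula for the product of a Gaussian of width `δ` in the projection and a fixed
Gaussian: the Fourier transform of the former lives on the plane `{(ξ, tξ)}`, which the latter
thickens. -/
lemma pair_energy (μ : Measure P) [IsProbabilityMeasure μ] {δ : ℝ} (hδ : 0 < δ) (t : ℝ) :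
    ∫⁻ z, ∫⁻ w, ENNReal.ofReal
      ((Real.pi / (δ ^ 2 / 2) * Real.exp (-(‖pt t (z - w)‖ ^ 2 / (4 * (δ ^ 2 / 2))))) *
        ((Real.pi / (1 / 2)) ^ 2 * Real.exp (-(n2 (z - w) / (4 * (1 / 2)))))) ∂μ ∂μ =
      ∫⁻ ζ : P, kern δ t ζ * ENNReal.ofReal (ft2 μ ζ) := by
  have hb : 0 < δ ^ 2 / 2 := by positivity
  have hc : (0 : ℝ) < 1 / 2 := by norm_num
  have hft := measurable_ft2 μ
  have key := energy_eq (γ := (volume : Measure V).prod (volume : Measure P)) μ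
    (g := fun ω => Real.exp (-(δ ^ 2 / 2 * ‖ω.1‖ ^ 2)) * Real.exp (-(1 / 2 * n2 ω.2)))
    ((integrable_gaussV hb).mul_prod (integrable_gaussP hc)) (fun ω => by positivity)
    (Z := fun ω => (ω.1, t • ω.1) + ω.2) (by fun_prop)
    (κ := fun v => (Real.pi / (δ ^ 2 / 2) * Real.exp (-(‖pt t v‖ ^ 2 / (4 * (δ ^ 2 / 2))))) *
        ((Real.pi / (1 / 2)) ^ 2 * Real.exp (-(n2 v / (4 * (1 / 2))))))
    (fun v => by positivity) (by fun_prop) (fun v => by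
      rw [Complex.ofReal_mul, ← integral_gaussV hb, ← integral_gaussP hc, ← integral_prod_mul]
      refine integral_congr_ae (Eventually.of_forall fun ω => ?_)
      simp only [ch]
      rw [Complex.ofReal_mul, mul_mul_mul_comm, ← Complex.exp_add]
      congr 2
      rw [← mul_add, ← Complex.ofReal_add]
      congr 2
      simp only [dot, pt, Prod.fst_add, Prod.snd_add, inner_add_right, inner_add_left,
        inner_smul_left, inner_smul_right]
      simp
      ring)
  rw [key, lintegral_prod _ (by fun_prop)]
  have : (volume : Measure P).IsAddRightInvariant :=
    inferInstanceAs ((volume : Measure V).prod (volume : Measure V)).IsAddRightInvariant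
  have hinner : ∀ ξ : V, ∫⁻ p : P, ENNReal.ofReal (Real.exp (-(δ ^ 2 / 2 * ‖ξ‖ ^ 2)) *
      Real.exp (-(1 / 2 * n2 p))) * ENNReal.ofReal (ft2 μ ((ξ, t • ξ) + p)) =
      ∫⁻ ζ : P, ENNReal.ofReal (Real.exp (-(δ ^ 2 / 2 * ‖ξ‖ ^ 2)) *
        Real.exp (-(1 / 2 * n2 (ζ - (ξ, t • ξ))))) * ENNReal.ofReal (ft2 μ ζ) := by
    intro ξ
    refine Eq.trans ?_ (lintegral_add_right_eq_self _ ((ξ, t • ξ) : P))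
    refine lintegral_congr fun p => ?_
    rw [add_sub_cancel_right, add_comm p]
  simp only [hinner]
  rw [lintegral_lintegral_swap (by fun_prop)]
  refine lintegral_congr fun ζ => ?_
  rw [lintegral_mul_const _ (by fun_prop)]
  rfl

/-! ### The kernel estimate and the average over the projections -/

/-- Peetre's inequality along the plane `{(ξ, tξ)}`, combined with the decay of the Gaussians. -/
lemma exists_kern_pointwise (T : ℝ) {β : ℝ} (hβ : 0 ≤ β) : ∃ C : ℝ, 0 < C ∧
    ∀ δ t : ℝ, 0 < δ → δ ≤ 1 → t ∈ Icc (-T) T → ∀ (ζ : P) (ξ : V),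
      Real.exp (-(δ ^ 2 / 2 * ‖ξ‖ ^ 2)) * Real.exp (-(1 / 2 * n2 (ζ - (ξ, t • ξ)))) ≤
        C * (δ ^ (-β) * (1 + n2 ζ) ^ (-((β + 1) / 2))) * (Real.exp (-(1 / 8 * ‖ζ.1 - ξ‖ ^ 2)) *
          ((1 + ‖ξ‖) * Real.exp (-(1 / 4 * ‖ζ.2 - t • ξ‖ ^ 2)))) := by
  set a := (β + 1) / 2 with ha
  have ha0 : 0 ≤ a := by positivity
  obtain ⟨C1, hC1, h1⟩ := exists_rpow_le_exp (b := β / 2) (by positivity)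
    (by norm_num : (0 : ℝ) < 1 / 2)
  obtain ⟨C2, hC2, h2⟩ := exists_rpow_le_exp ha0 (by norm_num : (0 : ℝ) < 1 / 8)
  have hT : 0 < 2 + 2 * T ^ 2 := by positivity
  refine ⟨C1 * (2 + 2 * T ^ 2) ^ a * C2, by positivity, fun δ t hδ hδ1 ht ζ ξ => ?_⟩
  set N := 1 + ‖ξ‖ ^ 2 with hN
  have hN0 : 0 < N := by positivity
  set p := n2 (ζ - (ξ, t • ξ)) with hp
  have hp0 : 0 ≤ p := n2_nonneg _
  have hpe : p = ‖ζ.1 - ξ‖ ^ 2 + ‖ζ.2 - t • ξ‖ ^ 2 := rfl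
  have hz0 : 0 < 1 + n2 ζ := by have := n2_nonneg ζ; linarith
  have E1 : δ ^ β * N ^ (β / 2) ≤ C1 * Real.exp (δ ^ 2 / 2 * ‖ξ‖ ^ 2) := by
    calc δ ^ β * N ^ (β / 2) = (δ ^ 2 * N) ^ (β / 2) := by
          rw [Real.mul_rpow (by positivity) hN0.le, ← Real.rpow_natCast δ 2,
            ← Real.rpow_mul hδ.le]
          congr 2
          push_cast
          ring
      _ ≤ (1 + δ ^ 2 * ‖ξ‖ ^ 2) ^ (β / 2) := by
          refine Real.rpow_le_rpow (by positivity) ?_ (by positivity)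
          have : δ ^ 2 ≤ 1 := pow_le_one₀ hδ.le hδ1
          rw [hN]
          nlinarith
      _ ≤ C1 * Real.exp (1 / 2 * (δ ^ 2 * ‖ξ‖ ^ 2)) := h1 _ (by positivity)
      _ = _ := by congr 2; ring
  have hpeetre : 1 + n2 ζ ≤ (2 + 2 * T ^ 2) * N * (1 + p) := by
    have e1 : ‖ζ.1‖ ^ 2 ≤ 2 * ‖ξ‖ ^ 2 + 2 * ‖ζ.1 - ξ‖ ^ 2 := by
      have : ‖ζ.1‖ ≤ ‖ξ‖ + ‖ζ.1 - ξ‖ := by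
        simpa using norm_add_le ξ (ζ.1 - ξ)
      nlinarith [sq_nonneg (‖ξ‖ - ‖ζ.1 - ξ‖), norm_nonneg ζ.1]
    have e2 : ‖ζ.2‖ ^ 2 ≤ 2 * (T ^ 2 * ‖ξ‖ ^ 2) + 2 * ‖ζ.2 - t • ξ‖ ^ 2 := by
      have e3 : ‖ζ.2‖ ≤ ‖t • ξ‖ + ‖ζ.2 - t • ξ‖ := by
        simpa using norm_add_le (t • ξ) (ζ.2 - t • ξ)
      have e4 : ‖t • ξ‖ ^ 2 ≤ T ^ 2 * ‖ξ‖ ^ 2 := by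
        rw [norm_smul, mul_pow, Real.norm_eq_abs, sq_abs]
        have : t ^ 2 ≤ T ^ 2 := sq_le_sq' ht.1 ht.2
        gcongr
      nlinarith [sq_nonneg (‖t • ξ‖ - ‖ζ.2 - t • ξ‖), norm_nonneg ζ.2]
    have e5 : n2 ζ ≤ 2 * (1 + T ^ 2) * ‖ξ‖ ^ 2 + 2 * p := by
      rw [hpe, n2]
      linarith
    have e6 : 0 ≤ ‖ξ‖ ^ 2 * p := by positivity
    have e7 : 0 ≤ T ^ 2 * (‖ξ‖ ^ 2 * p) := by positivity
    have e8 : 0 ≤ T ^ 2 * p := by positivity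
    rw [hN]
    nlinarith [sq_nonneg T]
  have hNhalf : N ^ (1 / 2 : ℝ) ≤ 1 + ‖ξ‖ := by
    rw [← Real.sqrt_eq_rpow]
    refine Real.sqrt_le_iff.2 ⟨by positivity, ?_⟩
    rw [hN]
    nlinarith [norm_nonneg ξ]
  have E2 : (1 + n2 ζ) ^ a ≤ (2 + 2 * T ^ 2) ^ a * (N ^ (β / 2) * (1 + ‖ξ‖)) *
      (C2 * Real.exp (1 / 8 * p)) := by
    calc (1 + n2 ζ) ^ a ≤ ((2 + 2 * T ^ 2) * N * (1 + p)) ^ a :=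
          Real.rpow_le_rpow hz0.le hpeetre ha0
      _ = (2 + 2 * T ^ 2) ^ a * (N ^ (β / 2) * N ^ (1 / 2 : ℝ)) * (1 + p) ^ a := by
          rw [Real.mul_rpow (by positivity) (by positivity), Real.mul_rpow hT.le hN0.le,
            ← Real.rpow_add hN0]
          congr 3
          rw [ha]
          ring
      _ ≤ _ := by
          gcongr
          exact h2 p hp0
  have E3 : δ ^ β * (1 + n2 ζ) ^ a ≤ C1 * (2 + 2 * T ^ 2) ^ a * C2 *
      (Real.exp (δ ^ 2 / 2 * ‖ξ‖ ^ 2) * Real.exp (1 / 8 * p)) * (1 + ‖ξ‖) := by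
    calc δ ^ β * (1 + n2 ζ) ^ a ≤ δ ^ β * ((2 + 2 * T ^ 2) ^ a * (N ^ (β / 2) * (1 + ‖ξ‖)) *
          (C2 * Real.exp (1 / 8 * p))) := by gcongr
      _ = (δ ^ β * N ^ (β / 2)) * ((2 + 2 * T ^ 2) ^ a * (1 + ‖ξ‖) *
          (C2 * Real.exp (1 / 8 * p))) := by ring
      _ ≤ (C1 * Real.exp (δ ^ 2 / 2 * ‖ξ‖ ^ 2)) * ((2 + 2 * T ^ 2) ^ a * (1 + ‖ξ‖) *
          (C2 * Real.exp (1 / 8 * p))) := by gcongr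
      _ = _ := by ring
  have E4 : Real.exp (-(δ ^ 2 / 2 * ‖ξ‖ ^ 2)) * Real.exp (-(1 / 2 * p)) *
      (Real.exp (δ ^ 2 / 2 * ‖ξ‖ ^ 2) * Real.exp (1 / 8 * p)) ≤
      Real.exp (-(1 / 8 * ‖ζ.1 - ξ‖ ^ 2)) * Real.exp (-(1 / 4 * ‖ζ.2 - t • ξ‖ ^ 2)) := by
    simp only [← Real.exp_add]
    refine Real.exp_le_exp.2 ?_
    rw [hpe]
    nlinarith [sq_nonneg ‖ζ.1 - ξ‖, sq_nonneg ‖ζ.2 - t • ξ‖]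
  rw [Real.rpow_neg hδ.le, Real.rpow_neg hz0.le, ← mul_inv, mul_right_comm, ← div_eq_mul_inv,
    le_div_iff₀ (by positivity)]
  calc Real.exp (-(δ ^ 2 / 2 * ‖ξ‖ ^ 2)) * Real.exp (-(1 / 2 * p)) * (δ ^ β * (1 + n2 ζ) ^ a)
      ≤ Real.exp (-(δ ^ 2 / 2 * ‖ξ‖ ^ 2)) * Real.exp (-(1 / 2 * p)) *
        (C1 * (2 + 2 * T ^ 2) ^ a * C2 *
          (Real.exp (δ ^ 2 / 2 * ‖ξ‖ ^ 2) * Real.exp (1 / 8 * p)) * (1 + ‖ξ‖)) := by gcongr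
    _ = C1 * (2 + 2 * T ^ 2) ^ a * C2 * (1 + ‖ξ‖) *
        (Real.exp (-(δ ^ 2 / 2 * ‖ξ‖ ^ 2)) * Real.exp (-(1 / 2 * p)) *
          (Real.exp (δ ^ 2 / 2 * ‖ξ‖ ^ 2) * Real.exp (1 / 8 * p))) := by ring
    _ ≤ C1 * (2 + 2 * T ^ 2) ^ a * C2 * (1 + ‖ξ‖) *
        (Real.exp (-(1 / 8 * ‖ζ.1 - ξ‖ ^ 2)) * Real.exp (-(1 / 4 * ‖ζ.2 - t • ξ‖ ^ 2))) := by
          gcongr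
    _ = _ := by ring

/-- The line `t ↦ t • ξ` has speed `‖ξ‖`, so it spends time `O(‖ξ‖⁻¹)` near any given point. -/
lemma lintegral_line_le (ξ u : V) :
    ∫⁻ t : ℝ, ENNReal.ofReal (‖ξ‖ * Real.exp (-(1 / 4 * ‖u - t • ξ‖ ^ 2))) ≤
      ENNReal.ofReal √(4 * Real.pi) := by
  by_cases hξ : ξ = 0
  · simp [hξ]
  have hn : 0 < ‖ξ‖ := norm_pos_iff.2 hξ
  set c := inner ℝ u ξ / ‖ξ‖ ^ 2 with hc
  have hb : 0 < ‖ξ‖ ^ 2 / 4 := by positivity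
  have h1 : ∀ t : ℝ, ‖ξ‖ ^ 2 * (t - c) ^ 2 ≤ ‖u - t • ξ‖ ^ 2 := by
    intro t
    rw [norm_sub_sq_real, norm_smul, mul_pow, Real.norm_eq_abs, sq_abs, inner_smul_right]
    have h2 : (inner ℝ u ξ : ℝ) = c * ‖ξ‖ ^ 2 := by rw [hc]; field_simp
    have h3 : (c * ‖ξ‖) ^ 2 ≤ ‖u‖ ^ 2 := by
      refine sq_le_sq' ?_ ?_
      · have := neg_le_of_abs_le (abs_real_inner_le_norm u ξ)
        rw [h2] at this
        nlinarith
      · have := real_inner_le_norm u ξ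
        rw [h2] at this
        nlinarith
    rw [h2]
    nlinarith
  calc ∫⁻ t : ℝ, ENNReal.ofReal (‖ξ‖ * Real.exp (-(1 / 4 * ‖u - t • ξ‖ ^ 2)))
      ≤ ∫⁻ t : ℝ, ENNReal.ofReal ‖ξ‖ *
          ENNReal.ofReal (Real.exp (-(‖ξ‖ ^ 2 / 4) * (t - c) ^ 2)) := by
        refine lintegral_mono fun t => ?_
        rw [← ENNReal.ofReal_mul hn.le]
        refine ENNReal.ofReal_le_ofReal ?_
        gcongr
        have := h1 t
        linarith
    _ = ENNReal.ofReal ‖ξ‖ * ENNReal.ofReal √(Real.pi / (‖ξ‖ ^ 2 / 4)) := by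
        rw [lintegral_const_mul' _ _ ENNReal.ofReal_ne_top, lintegral_sub_right_eq_self
          (fun t : ℝ => ENNReal.ofReal (Real.exp (-(‖ξ‖ ^ 2 / 4) * t ^ 2))) c,
          ← ofReal_integral_eq_lintegral_ofReal (integrable_exp_neg_mul_sq hb)
            (Eventually.of_forall fun t => Real.exp_nonneg _), integral_gaussian]
    _ = _ := by
        rw [← ENNReal.ofReal_mul hn.le]
        congr 1
        rw [← Real.sqrt_sq hn.le, ← Real.sqrt_mul (by positivity), Real.sqrt_sq hn.le]
        congr 1
        field_simp

/-- The kernel averaged over the projections decays like `|ζ|^(-(β + 1))`: averaging gains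
one order of decay over the exponent `β` paid for in powers of `δ`. -/
lemma exists_lintegral_kern_le (T : ℝ) {β : ℝ} (hβ : 0 ≤ β) : ∃ C : ℝ≥0∞, C ≠ ∞ ∧
    ∀ δ : ℝ, 0 < δ → δ ≤ 1 → ∀ ζ : P, ∫⁻ t in Icc (-T) T, kern δ t ζ ≤
      C * ENNReal.ofReal (δ ^ (-β)) * ENNReal.ofReal ((1 + n2 ζ) ^ (-((β + 1) / 2))) := by
  obtain ⟨C, hC, h⟩ := exists_kern_pointwise T hβ
  set G := ∫⁻ ξ : V, ENNReal.ofReal (Real.exp (-(1 / 8 * ‖ξ‖ ^ 2))) with hG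
  have hGtop : G ≠ ∞ := (integrable_gaussV (by norm_num : (0 : ℝ) < 1 / 8)).lintegral_lt_top.ne
  set L := volume (Icc (-T) T) + ENNReal.ofReal √(4 * Real.pi) with hL
  have hLtop : L ≠ ∞ := ENNReal.add_ne_top.2 ⟨by simp, ENNReal.ofReal_ne_top⟩
  refine ⟨ENNReal.ofReal C * (G * L), ENNReal.mul_ne_top ENNReal.ofReal_ne_top
    (ENNReal.mul_ne_top hGtop hLtop), fun δ hδ hδ1 ζ => ?_⟩
  have hz0 : 0 < 1 + n2 ζ := by have := n2_nonneg ζ; linarith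
  set A := C * (δ ^ (-β) * (1 + n2 ζ) ^ (-((β + 1) / 2))) with hA
  have hA0 : 0 ≤ A := by positivity
  have hline : ∀ ξ : V, ∫⁻ t in Icc (-T) T,
      ENNReal.ofReal ((1 + ‖ξ‖) * Real.exp (-(1 / 4 * ‖ζ.2 - t • ξ‖ ^ 2))) ≤ L := by
    intro ξ
    calc _ ≤ ∫⁻ t in Icc (-T) T,
          (1 + ENNReal.ofReal (‖ξ‖ * Real.exp (-(1 / 4 * ‖ζ.2 - t • ξ‖ ^ 2)))) := by
          refine lintegral_mono fun t => ?_
          rw [← ENNReal.ofReal_one, ← ENNReal.ofReal_add zero_le_one (by positivity)]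
          refine ENNReal.ofReal_le_ofReal ?_
          have : Real.exp (-(1 / 4 * ‖ζ.2 - t • ξ‖ ^ 2)) ≤ 1 :=
            Real.exp_le_one_iff.2 (by rw [neg_nonpos]; positivity)
          linarith
      _ = volume (Icc (-T) T) + ∫⁻ t in Icc (-T) T,
          ENNReal.ofReal (‖ξ‖ * Real.exp (-(1 / 4 * ‖ζ.2 - t • ξ‖ ^ 2))) := by
          rw [lintegral_add_left measurable_const, setLIntegral_const, one_mul]
      _ ≤ L := by
          rw [hL]
          gcongr
          exact (setLIntegral_le_lintegral _ _).trans (lintegral_line_le ξ ζ.2)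
  calc ∫⁻ t in Icc (-T) T, kern δ t ζ
      ≤ ∫⁻ t in Icc (-T) T, ∫⁻ ξ : V, ENNReal.ofReal A *
          (ENNReal.ofReal (Real.exp (-(1 / 8 * ‖ζ.1 - ξ‖ ^ 2))) *
            ENNReal.ofReal ((1 + ‖ξ‖) * Real.exp (-(1 / 4 * ‖ζ.2 - t • ξ‖ ^ 2)))) := by
        refine setLIntegral_mono' measurableSet_Icc fun t ht => lintegral_mono fun ξ => ?_
        rw [← ENNReal.ofReal_mul (Real.exp_nonneg _), ← ENNReal.ofReal_mul hA0]
        exact ENNReal.ofReal_le_ofReal (h δ t hδ hδ1 ht ζ ξ)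
    _ = ENNReal.ofReal A * ∫⁻ ξ : V, ENNReal.ofReal (Real.exp (-(1 / 8 * ‖ζ.1 - ξ‖ ^ 2))) *
          ∫⁻ t in Icc (-T) T,
            ENNReal.ofReal ((1 + ‖ξ‖) * Real.exp (-(1 / 4 * ‖ζ.2 - t • ξ‖ ^ 2))) := by
        rw [lintegral_lintegral_swap (by fun_prop), ← lintegral_const_mul' _ _ ENNReal.ofReal_ne_top]
        refine lintegral_congr fun ξ => ?_
        rw [lintegral_const_mul' _ _ ENNReal.ofReal_ne_top,
          lintegral_const_mul' _ _ ENNReal.ofReal_ne_top]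
    _ ≤ ENNReal.ofReal A * ∫⁻ ξ : V,
          ENNReal.ofReal (Real.exp (-(1 / 8 * ‖ζ.1 - ξ‖ ^ 2))) * L := by
        gcongr with ξ
        exact hline ξ
    _ = ENNReal.ofReal A * (G * L) := by
        rw [lintegral_mul_const' _ _ hLtop, lintegral_sub_left_eq_self
          (fun ξ : V => ENNReal.ofReal (Real.exp (-(1 / 8 * ‖ξ‖ ^ 2))))]
    _ = _ := by
        rw [hA, ENNReal.ofReal_mul hC.le, ENNReal.ofReal_mul (by positivity)]
        ring

lemma measurable_kern (δ : ℝ) : Measurable fun q : ℝ × P => kern δ q.1 q.2 := by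
  refine Measurable.lintegral_prod_right' (f := fun r : (ℝ × P) × V =>
    ENNReal.ofReal (Real.exp (-(δ ^ 2 / 2 * ‖r.2‖ ^ 2)) *
      Real.exp (-(1 / 2 * n2 (r.1.2 - (r.2, r.1.1 • r.2)))))) ?_
  fun_prop

/-- The mass of the pairs of points whose projections by `pt t` are `δ`-close. -/
noncomputable def pairs (μ : Measure P) (δ t : ℝ) : ℝ≥0∞ := ∫⁻ z, μ {w | ‖pt t (z - w)‖ ≤ δ} ∂μ

lemma measurableSet_pairs (δ : ℝ) :
    MeasurableSet {q : (ℝ × P) × P | ‖pt q.1.1 (q.1.2 - q.2)‖ ≤ δ} := by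
  have : Continuous fun q : (ℝ × P) × P => ‖pt q.1.1 (q.1.2 - q.2)‖ := by
    unfold pt; fun_prop
  exact (isClosed_le this continuous_const).measurableSet

lemma measurable_pairs (μ : Measure P) [IsProbabilityMeasure μ] (δ : ℝ) :
    Measurable (pairs μ δ) := by
  have h := measurable_measure_prodMk_left (ν := μ) (measurableSet_pairs δ)
  exact Measurable.lintegral_prod_right'
    (f := fun q : ℝ × P => μ {w | ‖pt q.1 (q.2 - w)‖ ≤ δ}) h

/-- The indicator of the pairs with `δ`-close projections is at most a constant multiple of a
Gaussian of width `δ` in the projection, times a fixed Gaussian that is bounded below on the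
compact support. -/
lemma exists_pairs_le {μ : Measure P} [IsProbabilityMeasure μ] {K : Set P} (hK : IsCompact K)
    (hμK : μ Kᶜ = 0) : ∃ C : ℝ≥0∞, C ≠ ∞ ∧ ∀ δ t : ℝ, 0 < δ →
      pairs μ δ t ≤ C * ENNReal.ofReal (δ ^ 2) *
        ∫⁻ ζ : P, kern δ t ζ * ENNReal.ofReal (ft2 μ ζ) := by
  obtain ⟨R, hR⟩ : ∃ R, ∀ z ∈ K, ∀ w ∈ K, n2 (z - w) ≤ R := by
    obtain ⟨R, hR⟩ := (hK.prod hK).bddAbove_image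
      (f := fun p : P × P => n2 (p.1 - p.2)) (by fun_prop)
    exact ⟨R, fun z hz w hw => hR ⟨(z, w), ⟨hz, hw⟩, rfl⟩⟩
  refine ⟨ENNReal.ofReal (Real.exp (1 / 2) * Real.exp (R / 2)), ENNReal.ofReal_ne_top,
    fun δ t hδ => ?_⟩
  have hae : ∀ᵐ z ∂μ, z ∈ K := by
    rw [ae_iff]; exact hμK
  rw [← pair_energy μ hδ t, pairs, ← ENNReal.ofReal_mul (by positivity),
    ← lintegral_const_mul' _ _ ENNReal.ofReal_ne_top]
  refine lintegral_mono_ae ?_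
  filter_upwards [hae] with z hz
  rw [← lintegral_const_mul' _ _ ENNReal.ofReal_ne_top]
  have hS : MeasurableSet {w | ‖pt t (z - w)‖ ≤ δ} :=
    (isClosed_le (by fun_prop) continuous_const).measurableSet
  rw [← lintegral_indicator_one hS]
  refine lintegral_mono_ae ?_
  filter_upwards [hae] with w hw
  by_cases hm : ‖pt t (z - w)‖ ≤ δ
  · rw [indicator_of_mem (show w ∈ {w | ‖pt t (z - w)‖ ≤ δ} from hm), Pi.one_apply, ← ENNReal.ofReal_mul (by positivity),
      ← ENNReal.ofReal_one]
    refine ENNReal.ofReal_le_ofReal ?_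
    have e1 : 1 ≤ Real.exp (1 / 2) *
        Real.exp (-(‖pt t (z - w)‖ ^ 2 / (4 * (δ ^ 2 / 2)))) := by
      rw [← Real.exp_add]
      refine Real.one_le_exp ?_
      have : ‖pt t (z - w)‖ ^ 2 / (4 * (δ ^ 2 / 2)) ≤ 1 / 2 := by
        rw [div_le_iff₀ (by positivity)]
        have := pow_le_pow_left₀ (norm_nonneg _) hm 2
        linarith
      linarith
    have e2 : 1 ≤ Real.exp (R / 2) * Real.exp (-(n2 (z - w) / (4 * (1 / 2)))) := by
      rw [← Real.exp_add]
      refine Real.one_le_exp ?_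
      have := hR z hz w hw
      linarith
    have hpi := Real.two_le_pi
    have e3 : 1 ≤ δ ^ 2 * (Real.pi / (δ ^ 2 / 2)) * (Real.pi / (1 / 2)) ^ 2 := by
      have e4 : δ ^ 2 * (Real.pi / (δ ^ 2 / 2)) = 2 * Real.pi := by field_simp
      rw [e4]
      have e5 : 1 ≤ Real.pi / (1 / 2) := by linarith
      nlinarith [one_le_pow₀ (n := 2) e5]
    calc (1 : ℝ) = 1 * 1 * 1 := by norm_num
      _ ≤ (δ ^ 2 * (Real.pi / (δ ^ 2 / 2)) * (Real.pi / (1 / 2)) ^ 2) *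
          (Real.exp (1 / 2) * Real.exp (-(‖pt t (z - w)‖ ^ 2 / (4 * (δ ^ 2 / 2))))) *
          (Real.exp (R / 2) * Real.exp (-(n2 (z - w) / (4 * (1 / 2))))) := by
          gcongr
      _ = _ := by ring
  · rw [indicator_of_notMem (show w ∉ {w | ‖pt t (z - w)‖ ≤ δ} from hm)]
    exact zero_le

/-- The mass of the pairs with `δ`-close projections is `O(δ^(s' - 1))` on average. -/
lemma exists_lintegral_pairs_le {μ : Measure P} [IsProbabilityMeasure μ] {K : Set P}
    (hK : IsCompact K) (hμK : μ Kᶜ = 0) {s' : ℝ} (hs' : s' ≤ 3)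
    (hE : ∫⁻ ζ : P, ENNReal.ofReal ((1 + n2 ζ) ^ (-((4 - s') / 2))) *
      ENNReal.ofReal (ft2 μ ζ) ≠ ∞) (T : ℝ) : ∃ C : ℝ≥0∞, C ≠ ∞ ∧
      ∀ δ : ℝ, 0 < δ → δ ≤ 1 →
        ∫⁻ t in Icc (-T) T, pairs μ δ t ≤ C * ENNReal.ofReal (δ ^ (s' - 1)) := by
  obtain ⟨C1, hC1, h1⟩ := exists_pairs_le hK hμK
  obtain ⟨C2, hC2, h2⟩ := exists_lintegral_kern_le T (β := 3 - s') (by linarith)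
  rw [show 3 - s' + 1 = 4 - s' by ring] at h2
  set H := ∫⁻ ζ : P, ENNReal.ofReal ((1 + n2 ζ) ^ (-((4 - s') / 2))) * ENNReal.ofReal (ft2 μ ζ)
    with hH
  refine ⟨C1 * C2 * H, ENNReal.mul_ne_top (ENNReal.mul_ne_top hC1 hC2) hE,
    fun δ hδ hδ1 => ?_⟩
  have hft := measurable_ft2 μ
  have hkern := measurable_kern δ
  have hc1 : C1 * ENNReal.ofReal (δ ^ 2) ≠ ∞ := ENNReal.mul_ne_top hC1 ENNReal.ofReal_ne_top
  have hc2 : C2 * ENNReal.ofReal (δ ^ (-(3 - s'))) ≠ ∞ :=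
    ENNReal.mul_ne_top hC2 ENNReal.ofReal_ne_top
  calc ∫⁻ t in Icc (-T) T, pairs μ δ t
      ≤ ∫⁻ t in Icc (-T) T, C1 * ENNReal.ofReal (δ ^ 2) *
          ∫⁻ ζ : P, kern δ t ζ * ENNReal.ofReal (ft2 μ ζ) :=
        lintegral_mono fun t => h1 δ t hδ
    _ = C1 * ENNReal.ofReal (δ ^ 2) * ∫⁻ ζ : P, (∫⁻ t in Icc (-T) T, kern δ t ζ) *
          ENNReal.ofReal (ft2 μ ζ) := by
        rw [lintegral_const_mul' _ _ hc1, lintegral_lintegral_swap]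
        · congr 1
          refine lintegral_congr fun ζ => ?_
          rw [lintegral_mul_const' _ _ ENNReal.ofReal_ne_top]
        · exact (hkern.mul (by fun_prop)).aemeasurable
    _ ≤ C1 * ENNReal.ofReal (δ ^ 2) * ∫⁻ ζ : P, C2 * ENNReal.ofReal (δ ^ (-(3 - s'))) *
          (ENNReal.ofReal ((1 + n2 ζ) ^ (-((4 - s') / 2))) * ENNReal.ofReal (ft2 μ ζ)) := by
        refine mul_le_mul_right (lintegral_mono fun ζ => ?_) _
        rw [← mul_assoc]
        exact mul_le_mul_left (h2 δ hδ hδ1 ζ) _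
    _ = C1 * C2 * H * (ENNReal.ofReal (δ ^ 2) * ENNReal.ofReal (δ ^ (-(3 - s')))) := by
        rw [lintegral_const_mul' _ _ hc2]
        ring
    _ = _ := by
        rw [← ENNReal.ofReal_mul (by positivity), ← Real.rpow_natCast δ 2, ← Real.rpow_add hδ]
        congr 3
        push_cast
        ring

/-! ### Conclusion: dimension and measure of the projections -/

lemma measurable_ball (ν : Measure V) [SFinite ν] (δ : ℝ) :
    Measurable fun u => ν (Metric.closedBall u δ) := by
  have hS : MeasurableSet {q : V × V | dist q.2 q.1 ≤ δ} :=
    (isClosed_le (by fun_prop) continuous_const).measurableSet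
  exact measurable_measure_prodMk_left (ν := ν) hS

lemma map_compl_image {μ : Measure P} {K : Set P} (hK : IsCompact K) (hμK : μ Kᶜ = 0) (t : ℝ) :
    μ.map (pt t) (pt t '' K)ᶜ = 0 := by
  rw [Measure.map_apply (continuous_pt t).measurable
    (hK.image (continuous_pt t)).isClosed.measurableSet.compl]
  refine measure_mono_null (fun z hz hzK => hz ⟨z, hzK, rfl⟩) hμK

/-- `pairs` is the average, for the projected measure, of the mass of a ball of radius `δ`. -/
lemma pairs_eq (μ : Measure P) (δ t : ℝ) [IsProbabilityMeasure μ] :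
    pairs μ δ t = ∫⁻ u, μ.map (pt t) (Metric.closedBall u δ) ∂(μ.map (pt t)) := by
  have hm : Measurable (pt t) := (continuous_pt t).measurable
  rw [lintegral_map (measurable_ball _ δ) hm, pairs]
  refine lintegral_congr fun z => ?_
  rw [Measure.map_apply hm Metric.isClosed_closedBall.measurableSet]
  congr 1
  ext w
  rw [mem_ofPred_eq, mem_preimage, Metric.mem_closedBall, pt_sub, dist_comm, dist_eq_norm]

/-- Mass distribution principle: a measure whose mass on dyadic balls centred on `E` is at most a
constant times the radius to the power `τ` is, on `E`, dominated by the `τ`-dimensional Hausdorff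
measure. -/
lemma restrict_le_hausdorff (ν : Measure V) {τ : ℝ} (hτ : 0 < τ) {E : Set V}
    (hE : MeasurableSet E) {c : ℝ≥0∞} (hc0 : c ≠ 0) (hc : c ≠ ∞)
    (h : ∀ u ∈ E, ∀ k : ℕ,
      ν (Metric.closedBall u ((1 / 2) ^ k)) ≤ c * ENNReal.ofReal (((1 / 2 : ℝ) ^ k) ^ τ)) :
    (c * ENNReal.ofReal (2 ^ τ))⁻¹ • ν.restrict E ≤ Measure.hausdorffMeasure τ := by
  have h2 : 0 < (2 : ℝ) ^ τ := by positivity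
  have h20 : ENNReal.ofReal ((2 : ℝ) ^ τ) ≠ 0 := by simpa using h2
  have hb0 : c * ENNReal.ofReal (2 ^ τ) ≠ 0 := mul_ne_zero hc0 h20
  have hb : c * ENNReal.ofReal (2 ^ τ) ≠ ∞ := ENNReal.mul_ne_top hc ENNReal.ofReal_ne_top
  refine Measure.le_hausdorffMeasure τ _ 1 one_pos fun s hs => ?_
  rw [Measure.smul_apply, smul_eq_mul, Measure.restrict_apply' hE]
  rcases (s ∩ E).eq_empty_or_nonempty with h0 | ⟨u, hus, huE⟩
  · simp [h0]
  rw [mul_comm, ← div_eq_mul_inv, ENNReal.div_le_iff hb0 hb]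
  have hd : Metric.ediam s ≠ ∞ := (hs.trans_lt ENNReal.one_lt_top).ne
  set d := (Metric.ediam s).toReal with hdd
  have hd' : Metric.ediam s = ENNReal.ofReal d := (ENNReal.ofReal_toReal hd).symm
  have hd0 : 0 ≤ d := ENNReal.toReal_nonneg
  have hd1 : d ≤ 1 := by
    have := ENNReal.toReal_mono ENNReal.one_ne_top hs
    simpa using this
  have hsub : ∀ k : ℕ, d ≤ (1 / 2) ^ k →
      ν (s ∩ E) ≤ c * ENNReal.ofReal (((1 / 2 : ℝ) ^ k) ^ τ) := by
    intro k hk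
    refine (measure_mono fun w hw => ?_).trans (h u huE k)
    rw [Metric.mem_closedBall, ← ENNReal.ofReal_le_ofReal_iff (by positivity), ← edist_dist]
    refine (Metric.edist_le_ediam_of_mem hw.1 hus).trans ?_
    rw [hd']
    exact ENNReal.ofReal_le_ofReal hk
  rcases hd0.eq_or_lt with hz | hpos
  · have hlim : Tendsto (fun k : ℕ => c * ENNReal.ofReal (((1 / 2 : ℝ) ^ k) ^ τ)) atTop (𝓝 0) := by
      have h1 : Tendsto (fun k : ℕ => ((1 / 2 : ℝ) ^ k) ^ τ) atTop (𝓝 0) := by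
        have := (tendsto_pow_atTop_nhds_zero_of_lt_one (r := (1 / 2 : ℝ)) (by norm_num)
          (by norm_num)).rpow_const (p := τ) (Or.inr hτ.le)
        rwa [Real.zero_rpow hτ.ne'] at this
      have h3 := ENNReal.Tendsto.const_mul (a := c) (ENNReal.tendsto_ofReal h1) (Or.inr hc)
      simpa using h3
    refine (ge_of_tendsto' hlim fun k => hsub k ?_).trans zero_le
    rw [← hz]; positivity
  · obtain ⟨k, hk1, hk2⟩ := exists_nat_pow_near_of_lt_one hpos hd1
      (by norm_num : (0 : ℝ) < 1 / 2) (by norm_num)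
    refine (hsub k hk2).trans ?_
    rw [hd', ENNReal.ofReal_rpow_of_pos hpos, mul_comm (ENNReal.ofReal (d ^ τ)), mul_assoc,
      ← ENNReal.ofReal_mul h2.le, ← Real.mul_rpow (by norm_num) hd0]
    refine mul_le_mul_right (ENNReal.ofReal_le_ofReal (Real.rpow_le_rpow (by positivity) ?_
      hτ.le)) _
    rw [pow_succ] at hk1
    linarith

/-- A projected measure with finite dyadic `τ`-energy lives on a set of positive
`τ`-dimensional Hausdorff measure. -/
lemma hausdorff_ne_zero {μ : Measure P} [IsProbabilityMeasure μ] {K : Set P}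
    (hK : IsCompact K) (hμK : μ Kᶜ = 0) {τ : ℝ} (hτ : 0 < τ) {t : ℝ}
    (h : ∑' k : ℕ, ENNReal.ofReal (((1 / 2 : ℝ) ^ k) ^ (-τ)) * pairs μ ((1 / 2) ^ k) t ≠ ∞) :
    Measure.hausdorffMeasure τ (pt t '' K) ≠ 0 := by
  have hm : Measurable (pt t) := (continuous_pt t).measurable
  set ν := μ.map (pt t) with hν
  have : IsProbabilityMeasure ν := Measure.isProbabilityMeasure_map hm.aemeasurable
  set f : V → ℝ≥0∞ := fun u => ∑' k : ℕ, ENNReal.ofReal (((1 / 2 : ℝ) ^ k) ^ (-τ)) *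
    ν (Metric.closedBall u ((1 / 2) ^ k)) with hf
  have hfk : ∀ k : ℕ, Measurable fun u => ENNReal.ofReal (((1 / 2 : ℝ) ^ k) ^ (-τ)) *
      ν (Metric.closedBall u ((1 / 2) ^ k)) := fun k => (measurable_ball ν _).const_mul _
  have hfm : Measurable f := Measurable.tsum hfk
  have hfi : ∫⁻ u, f u ∂ν ≠ ∞ := by
    rw [hf, lintegral_tsum fun k => (hfk k).aemeasurable]
    convert h using 3 with k
    rw [lintegral_const_mul' _ _ ENNReal.ofReal_ne_top, pairs_eq]
  have hae := ae_lt_top hfm hfi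
  obtain ⟨n, hn⟩ : ∃ n : ℕ, ν {u | f u ≤ n} ≠ 0 := by
    by_contra! hcon
    have h0 : ν (⋃ n : ℕ, {u | f u ≤ n}) = 0 := measure_iUnion_null hcon
    have h1 : ∀ᵐ u ∂ν, False := by
      have h2 : ∀ᵐ u ∂ν, u ∉ ⋃ n : ℕ, {u | f u ≤ n} := measure_eq_zero_iff_ae_notMem.1 h0
      filter_upwards [hae, h2] with u hu hu'
      obtain ⟨n, hn⟩ := ENNReal.exists_nat_gt hu.ne
      exact hu' (mem_iUnion.2 ⟨n, hn.le⟩)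
    rw [eventually_false_iff_eq_bot, ae_eq_bot] at h1
    exact IsProbabilityMeasure.ne_zero ν h1
  set E := {u | f u ≤ n} with hE
  have hEm : MeasurableSet E := measurableSet_le hfm measurable_const
  have hle := restrict_le_hausdorff ν hτ hEm (c := n + 1) (by simp)
    (by finiteness) (fun u hu k => by
      have hpos : 0 < ((1 / 2 : ℝ) ^ k) ^ τ := by positivity
      have h1 : ENNReal.ofReal (((1 / 2 : ℝ) ^ k) ^ (-τ)) *
          ν (Metric.closedBall u ((1 / 2) ^ k)) ≤ n + 1 :=
        (ENNReal.le_tsum k).trans (hu.trans le_self_add)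
      rw [Real.rpow_neg (by positivity), ENNReal.ofReal_inv_of_pos hpos, mul_comm,
        ← div_eq_mul_inv, ENNReal.div_le_iff (by simpa using hpos) ENNReal.ofReal_ne_top] at h1
      exact h1)
  intro h0
  have h1 := hle (pt t '' K)
  rw [h0, Measure.smul_apply, smul_eq_mul, nonpos_iff_eq_zero, mul_eq_zero] at h1
  rcases h1 with h1 | h1
  · rw [ENNReal.inv_eq_zero] at h1
    exact ENNReal.mul_ne_top (by finiteness) ENNReal.ofReal_ne_top h1
  · rw [Measure.restrict_apply' hEm] at h1
    refine hn (le_antisymm ?_ zero_le)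
    have h2 : ν (pt t '' K)ᶜ = 0 := map_compl_image hK hμK t
    calc ν E ≤ ν ((pt t '' K ∩ E) ∪ (pt t '' K)ᶜ) := measure_mono fun u hu => by
          by_cases hx : u ∈ pt t '' K
          · exact Or.inl ⟨hx, hu⟩
          · exact Or.inr hx
      _ ≤ ν (pt t '' K ∩ E) + ν (pt t '' K)ᶜ := measure_union_le _ _
      _ = 0 := by rw [h1, h2, add_zero]

/-- If along a sequence of scales the projected measure gives in average mass `O(δ ^ 2)` to a ball
of radius `δ`, then it cannot be singular, so that the projection has positive area. -/
lemma volume_ne_zero {μ : Measure P} [IsProbabilityMeasure μ] {K : Set P}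
    (hK : IsCompact K) (hμK : μ Kᶜ = 0) {t : ℝ}
    (h : liminf (fun k : ℕ => ENNReal.ofReal (((1 / 2 : ℝ) ^ k) ^ (-2 : ℝ)) *
      pairs μ ((1 / 2) ^ k) t) atTop ≠ ∞) :
    volume (pt t '' K) ≠ 0 := by
  intro h0
  have hm : Measurable (pt t) := (continuous_pt t).measurable
  set ν := μ.map (pt t) with hν
  have : IsProbabilityMeasure ν := Measure.isProbabilityMeasure_map hm.aemeasurable
  have hKc : IsCompact (pt t '' K) := hK.image (continuous_pt t)
  have hνK : ν (pt t '' K)ᶜ = 0 := map_compl_image hK hμK t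
  have hfk : ∀ k : ℕ, Measurable fun u => ENNReal.ofReal (((1 / 2 : ℝ) ^ k) ^ (-2 : ℝ)) *
      ν (Metric.closedBall u ((1 / 2) ^ k)) := fun k => (measurable_ball ν _).const_mul _
  have hfi : ∫⁻ u, liminf (fun k : ℕ => ENNReal.ofReal (((1 / 2 : ℝ) ^ k) ^ (-2 : ℝ)) *
      ν (Metric.closedBall u ((1 / 2) ^ k))) atTop ∂ν ≠ ∞ := by
    refine ne_top_of_le_ne_top h ((lintegral_liminf_le hfk).trans (le_of_eq ?_))
    congr 1
    ext k
    rw [lintegral_const_mul' _ _ ENNReal.ofReal_ne_top, pairs_eq]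
  have hae := ae_lt_top (Measurable.liminf hfk) hfi
  have hsing : (volume : Measure V) ⟂ₘ ν :=
    ⟨pt t '' K, hKc.isClosed.measurableSet, h0, hνK⟩
  have hrn : (volume : Measure V).rnDeriv ν =ᵐ[ν] 0 :=
    (Measure.rnDeriv_eq_zero _ _).2 hsing
  have hbes := Besicovitch.ae_tendsto_rnDeriv (volume : Measure V) ν
  have h1 : ∀ᵐ u ∂ν, False := by
    filter_upwards [hae, hrn, hbes] with u hu hu0 hlim
    rw [hu0, Pi.zero_apply] at hlim
    have hseq : Tendsto (fun k : ℕ => (1 / 2 : ℝ) ^ k) atTop (𝓝[>] 0) :=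
      tendsto_nhdsWithin_iff.2 ⟨tendsto_pow_atTop_nhds_zero_of_lt_one (by norm_num)
        (by norm_num), Eventually.of_forall fun k => by simp⟩
    have hlimInv := tendsto_inv_iff.2 (hlim.comp hseq)
    rw [ENNReal.inv_zero] at hlimInv
    -- The area of a disc is a constant multiple of the squared radius.
    set b := volume (Metric.ball (0 : V) 1) with hb
    have hb0 : b ≠ 0 := (Metric.measure_ball_pos _ _ one_pos).ne'
    have hb1 : b ≠ ∞ := measure_ball_lt_top.ne
    have hlim2 := ENNReal.Tendsto.const_mul (a := b) hlimInv (Or.inr hb1)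
    rw [ENNReal.mul_top hb0] at hlim2
    refine hu.ne (Tendsto.liminf_eq (hlim2.congr fun k => ?_))
    have hk : (0 : ℝ) < (1 / 2) ^ k := by positivity
    have hsq : 0 < ((1 / 2 : ℝ) ^ k) ^ (2 : ℝ) := by positivity
    simp only [Function.comp_apply]
    rw [Measure.addHaar_closedBall volume u hk.le, finrank_euclideanSpace_fin, ← hb,
      Real.rpow_neg hk.le, ENNReal.ofReal_inv_of_pos hsq, Real.rpow_ofNat]
    have hx1 : ENNReal.ofReal (((1 / 2 : ℝ) ^ k) ^ 2) ≠ ∞ := ENNReal.ofReal_ne_top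
    have hx0 : ENNReal.ofReal (((1 / 2 : ℝ) ^ k) ^ 2) ≠ 0 := by
      simp
    generalize ENNReal.ofReal (((1 / 2 : ℝ) ^ k) ^ 2) = x at *
    rw [ENNReal.inv_div (Or.inr (ENNReal.mul_ne_top hx1 hb1)) (Or.inr (mul_ne_zero hx0 hb0)),
      div_eq_mul_inv, ENNReal.mul_inv (Or.inl hx0) (Or.inr hb0)]
    calc b * (ν (Metric.closedBall u ((1 / 2) ^ k)) * (x⁻¹ * b⁻¹))
        = (b * b⁻¹) * (x⁻¹ * ν (Metric.closedBall u ((1 / 2) ^ k))) := by ring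
      _ = _ := by rw [ENNReal.mul_inv_cancel hb0 hb1, one_mul]
  rw [eventually_false_iff_eq_bot, ae_eq_bot] at h1
  exact IsProbabilityMeasure.ne_zero ν h1

/-- Below the dimension of `A`, there is a compactly supported measure on `A` for which the mass of
the pairs with `δ`-close projections is `O(δ^(s' - 1))` on average. -/
lemma exists_average_bound {A : Set P} (hA : MeasurableSet A) {s' : ℝ} (hs0 : 0 < s')
    (hs3 : s' ≤ 3) (hs : ENNReal.ofReal s' < dimH A) :
    ∃ K ⊆ A, IsCompact K ∧ ∃ μ : Measure P, IsProbabilityMeasure μ ∧ μ Kᶜ = 0 ∧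
      ∀ T : ℝ, ∃ C : ℝ≥0∞, C ≠ ∞ ∧ ∀ δ : ℝ, 0 < δ → δ ≤ 1 →
        ∫⁻ t in Icc (-T) T, pairs μ δ t ≤ C * ENNReal.ofReal (δ ^ (s' - 1)) := by
  obtain ⟨s, hs1, hs2⟩ := ENNReal.lt_iff_exists_nnreal_btwn.1 hs
  have hlt : s' < s := by
    rw [ENNReal.ofReal, ENNReal.coe_lt_coe] at hs1
    exact (Real.toNNReal_lt_iff_lt_coe hs0.le).1 hs1
  have hspos : 0 < s := by exact_mod_cast hs0.trans hlt
  obtain ⟨K, hKA, hK, μ, hμ, hμK, C, hC, h⟩ := exists_frostman hA hspos hs2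
  obtain ⟨D, hD, hg⟩ := exists_gauss_le (μ := μ) (NNReal.coe_pos.2 hspos) hC h
  exact ⟨K, hKA, hK, μ, hμ, hμK, fun T => exists_lintegral_pairs_le hK hμK hs3
    (energy_ne_top hlt (by linarith) hD hg) T⟩

/-- A property that holds almost everywhere on each bounded interval holds almost everywhere. -/
lemma ae_of_forall_Icc {p : ℝ → Prop} (h : ∀ T : ℝ, ∀ᵐ t ∂(volume.restrict (Icc (-T) T)), p t) :
    ∀ᵐ t : ℝ, p t := by
  have h1 : ∀ᵐ t : ℝ, ∀ n : ℕ, t ∈ Icc (-(n : ℝ)) n → p t :=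
    ae_all_iff.2 fun n => (ae_restrict_iff' measurableSet_Icc).1 (h n)
  filter_upwards [h1] with t ht
  obtain ⟨n, hn⟩ := exists_nat_ge |t|
  exact ht n (abs_le.1 hn)

/-- For `τ < s - 1` with `s < dimH A`, the dyadic `τ`-energies of the projections of a measure of
finite energy have a finite integral over bounded sets of parameters, hence are finite almost
everywhere. -/
lemma dim_case {A : Set P} (hA : MeasurableSet A) (h3 : dimH A ≤ 3) {τ : ℝ} (hτ : 0 < τ)
    (h : ENNReal.ofReal (τ + 1) < dimH A) :
    ∀ᵐ t : ℝ, ENNReal.ofReal τ ≤ dimH (pt t '' A) := by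
  obtain ⟨s, hs1, hs2⟩ := ENNReal.lt_iff_exists_nnreal_btwn.1 h
  have hlt : τ + 1 < s := by
    rw [ENNReal.ofReal, ENNReal.coe_lt_coe] at hs1
    exact (Real.toNNReal_lt_iff_lt_coe (by linarith)).1 hs1
  have hs3 : (s : ℝ) ≤ 3 := by exact_mod_cast (hs2.le.trans h3)
  obtain ⟨K, hKA, hK, μ, hμ, hμK, hav⟩ := exists_average_bound hA (s' := s) (by linarith) hs3
    (by simpa using hs2)
  refine ae_of_forall_Icc fun T => ?_
  obtain ⟨C, hC, hb⟩ := hav T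
  have hpm : ∀ k : ℕ, Measurable fun t => ENNReal.ofReal (((1 / 2 : ℝ) ^ k) ^ (-τ)) *
      pairs μ ((1 / 2) ^ k) t := fun k => (measurable_pairs μ _).const_mul _
  set q : ℝ := (1 / 2 : ℝ) ^ (s - 1 - τ : ℝ) with hq
  have hq1 : q < 1 := Real.rpow_lt_one (by norm_num) (by norm_num) (by linarith)
  have hq0 : 0 ≤ q := by positivity
  have hInt : ∫⁻ t in Icc (-T) T, ∑' k : ℕ, ENNReal.ofReal (((1 / 2 : ℝ) ^ k) ^ (-τ)) *
      pairs μ ((1 / 2) ^ k) t ≠ ∞ := by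
    rw [lintegral_tsum fun k => (hpm k).aemeasurable]
    refine ne_top_of_le_ne_top (b := C * ∑' k : ℕ, ENNReal.ofReal (q ^ k)) ?_ ?_
    · exact ENNReal.mul_ne_top hC (summable_geometric_of_lt_one hq0 hq1).tsum_ofReal_ne_top
    rw [← ENNReal.tsum_mul_left]
    refine ENNReal.tsum_le_tsum fun k => ?_
    have hk : (0 : ℝ) < (1 / 2) ^ k := by positivity
    rw [lintegral_const_mul' _ _ ENNReal.ofReal_ne_top]
    refine (mul_le_mul_right (hb _ hk (pow_le_one₀ (by norm_num) (by norm_num))) _).trans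
      (le_of_eq ?_)
    rw [mul_left_comm, ← ENNReal.ofReal_mul (by positivity), ← Real.rpow_add hk, hq,
      ← Real.rpow_natCast, ← Real.rpow_natCast, ← Real.rpow_mul (by norm_num),
      ← Real.rpow_mul (by norm_num)]
    congr 3
    ring
  filter_upwards [ae_lt_top (Measurable.tsum hpm) hInt] with t ht
  have h1 := hausdorff_ne_zero hK hμK hτ ht.ne
  have h2 : ENNReal.ofReal τ ≤ dimH (pt t '' K) :=
    le_dimH_of_hausdorffMeasure_ne_zero (d := τ.toNNReal)
      (by rwa [Real.coe_toNNReal _ hτ.le])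
  exact h2.trans (dimH_mono (image_mono hKA))

/-- At the exponent `s' = 3` the average bound `O(δ ^ 2)` has the order of the area of a disc, and
Fatou's lemma makes it available for almost every parameter along some sequence of scales. -/
lemma volume_case {A : Set P} (hA : MeasurableSet A) (h3 : 3 < dimH A) :
    ∀ᵐ t : ℝ, 0 < volume (pt t '' A) := by
  obtain ⟨K, hKA, hK, μ, hμ, hμK, hav⟩ := exists_average_bound hA (s' := 3) (by norm_num) le_rfl
    (by simpa using h3)
  refine ae_of_forall_Icc fun T => ?_
  obtain ⟨C, hC, hb⟩ := hav T
  have hpm : ∀ k : ℕ, Measurable fun t => ENNReal.ofReal (((1 / 2 : ℝ) ^ k) ^ (-2 : ℝ)) *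
      pairs μ ((1 / 2) ^ k) t := fun k => (measurable_pairs μ _).const_mul _
  have hInt : ∫⁻ t in Icc (-T) T, liminf (fun k : ℕ =>
      ENNReal.ofReal (((1 / 2 : ℝ) ^ k) ^ (-2 : ℝ)) * pairs μ ((1 / 2) ^ k) t) atTop ≠ ∞ := by
    refine ne_top_of_le_ne_top hC ((lintegral_liminf_le hpm).trans ?_)
    refine (liminf_le_liminf (v := fun _ => C) (Eventually.of_forall fun k => ?_)).trans
      (by rw [liminf_const])
    have hk : (0 : ℝ) < (1 / 2) ^ k := by positivity
    rw [lintegral_const_mul' _ _ ENNReal.ofReal_ne_top]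
    refine (mul_le_mul_right (hb _ hk (pow_le_one₀ (by norm_num) (by norm_num))) _).trans
      (le_of_eq ?_)
    rw [mul_left_comm, ← ENNReal.ofReal_mul (by positivity), ← Real.rpow_add hk]
    norm_num
  filter_upwards [ae_lt_top (Measurable.liminf hpm) hInt] with t ht
  exact (pos_iff_ne_zero.2 (volume_ne_zero hK hμK ht.ne)).trans_le
    (measure_mono (image_mono hKA))

end OberlinProj

/-- Oberlin's projection theorem for the family `π_t(x, y) = x + t·y`,
`π_t : ℝ² × ℝ² → ℝ²`: for a Borel set `A ⊆ ℝ² × ℝ² ≅ ℝ⁴`,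
(1) if `dim A ≤ 3` then `dim π_t(A) ≥ dim A - 1` for a.e. `t ∈ ℝ`;
(2) if `dim A > 3` then `L²(π_t(A)) > 0` for a.e. `t ∈ ℝ`. -/
theorem oberlin_projections_R4
    (A : Set (EuclideanSpace ℝ (Fin 2) × EuclideanSpace ℝ (Fin 2)))
    (hA : MeasurableSet A) :
    (dimH A ≤ 3 →
      ∀ᵐ t : ℝ, dimH A - 1 ≤ dimH ((fun p => p.1 + t • p.2) '' A)) ∧
    (3 < dimH A →
      ∀ᵐ t : ℝ, 0 < volume ((fun p => p.1 + t • p.2) '' A)) := by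
  refine ⟨fun h3 => ?_, fun h3 => OberlinProj.volume_case hA h3⟩
  -- It suffices to treat the countably many rational exponents below `dimH A - 1`.
  have hq : ∀ q : ℚ, ∀ᵐ t : ℝ, 0 < (q : ℝ) → ENNReal.ofReal ((q : ℝ) + 1) < dimH A →
      ENNReal.ofReal q ≤ dimH (OberlinProj.pt t '' A) := by
    intro q
    by_cases hq : 0 < (q : ℝ) ∧ ENNReal.ofReal ((q : ℝ) + 1) < dimH A
    · filter_upwards [OberlinProj.dim_case hA h3 hq.1 hq.2] with t ht _ _ using ht
    · exact Filter.Eventually.of_forall fun t h1 h2 => absurd ⟨h1, h2⟩ hq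
  filter_upwards [ae_all_iff.2 hq] with t ht
  refine le_of_forall_lt fun c hc => ?_
  obtain ⟨q, hq0, hcq, hqd⟩ := ENNReal.lt_iff_exists_rat_btwn.1 hc
  have hqn : (0 : ℝ) ≤ q := by exact_mod_cast hq0
  have hcq' : c < ENNReal.ofReal q := hcq
  have hpos : (0 : ℝ) < q := ENNReal.ofReal_pos.1 (zero_le.trans_lt hcq')
  refine hcq'.trans_le (ht q hpos ?_)
  rw [ENNReal.ofReal_add hqn zero_le_one, ENNReal.ofReal_one]
  exact lt_tsub_iff_right.1 hqd
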